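/- arXiv:1707.00052 — 6 statements merged into one kernel-verified Lean document; each statement's English description precedes it below -/
import Mathlib

section
/- For all integers q ≥ 2, ℓ ≥ 1, n ≥ ℓ and every x ∈ Z_q^n, the size of the single palindromic duplication sphere satisfies |S_{π,ℓ}(x)| ≤ n − ℓ + 2 − Σ_{i=ℓ+1}^{n} (i−ℓ) r_i(x), where r_i(x) is the number of runs of x of length exactly i. -/
/-!
A palindromic duplication of `a :: t` either duplicates the prefix of length `ℓ`, or is `a`
followed by a palindromic duplication of `t`; so prepending a letter creates at most one new
word (`pdup_cons`). If the first run of `a :: t` is longer than `ℓ`, the prefix duplication only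
lengthens that run by `ℓ`, and the same effect is obtained by duplicating inside `t`: no new word
is created (`pdup_cons_of_run`). In exactly that case the excess `∑ (|r| - ℓ)⁺` over the runs `r`
grows by one. By induction on the word, the number of words obtained by exactly one duplication,
plus the excess, is at most `n + 1 - ℓ` (`ncard_pdup_add_excess`). The sphere has at most one
further element, the word itself.
-/

namespace DupPaper

variable {α : Type*}

/-- `y` is obtained from `x` by one tandem duplication of length `ℓ`. -/
def TDup (ℓ : ℕ) (x y : List α) : Prop :=
  ∃ u v w : List α, v.length = ℓ ∧ x = u ++ v ++ w ∧ y = u ++ v ++ v ++ w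

/-- `y` is obtained from `x` by one tandem deletion of length `ℓ`. -/
def TDel (ℓ : ℕ) (x y : List α) : Prop :=
  ∃ u v w : List α, v.length = ℓ ∧ x = u ++ v ++ v ++ w ∧ y = u ++ v ++ w

/-- `y` is obtained from `x` by one palindromic duplication of length `ℓ`. -/
def PDup (ℓ : ℕ) (x y : List α) : Prop :=
  ∃ u v w : List α, v.length = ℓ ∧ x = u ++ v ++ w ∧ y = u ++ v ++ v.reverse ++ w

/-- `y` is obtained from `x` by one palindromic deletion of length `ℓ`. -/
def PDel (ℓ : ℕ) (x y : List α) : Prop :=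
  ∃ u v w : List α, v.length = ℓ ∧ x = u ++ v ++ v.reverse ++ w ∧ y = u ++ v ++ w

/-- `y` is reached from `x` by exactly `k` steps of the relation `rel`. -/
def reachK (rel : List α → List α → Prop) : ℕ → List α → List α → Prop
  | 0, x, y => x = y
  | k + 1, x, y => ∃ z, rel x z ∧ reachK rel k z y

/-- The sphere of all words reachable from `x` by at most `t` operations of type `rel`
(in particular it contains `x` itself). -/
def sphere (rel : List α → List α → Prop) (t : ℕ) (x : List α) : Set (List α) :=
  {y | ∃ k ≤ t, reachK rel k x y}

/-- A code `C` is `t`-error correcting for the error type `rel` if distinct codewords have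
disjoint spheres. -/
def Correcting (rel : List α → List α → Prop) (t : ℕ) (C : Set (List α)) : Prop :=
  ∀ c₁ ∈ C, ∀ c₂ ∈ C, (sphere rel t c₁ ∩ sphere rel t c₂).Nonempty → c₁ = c₂

/-- The list of maximal runs (maximal blocks of identical consecutive symbols) of a word. -/
def runs [DecidableEq α] : List α → List (List α)
  | [] => []
  | a :: rest =>
    match runs rest with
    | [] => [[a]]
    | r :: rs => if r.head? = some a then (a :: r) :: rs else [a] :: r :: rs

/-- `r(x)`: the number of runs of `x`. -/
def numRuns [DecidableEq α] (x : List α) : ℕ := (runs x).length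

/-- `r_i(x)`: the number of runs of `x` of length exactly `i`. -/
def numRunsEq [DecidableEq α] (x : List α) (i : ℕ) : ℕ :=
  ((runs x).filter (fun r => r.length = i)).length

/-- `r_{≥ i}(x)`: the number of runs of `x` of length at least `i`. -/
def numRunsGe [DecidableEq α] (x : List α) (i : ℕ) : ℕ :=
  ((runs x).filter (fun r => i ≤ r.length)).length

/-- `r_{I,2}(x)`: the number of runs of length exactly `2` located in the interior of `x`,
i.e. runs that are neither the first nor the last run of `x`. -/
def numInteriorRuns2 [DecidableEq α] (x : List α) : ℕ :=
  ((((runs x).drop 1).dropLast).filter (fun r => r.length = 2)).length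

/-- The second component `v` of the `ℓ`-step derivative `φ_ℓ(x) = (u, v)`:
`v = (x_{ℓ+1}, …, x_n) − (x_1, …, x_{n−ℓ})` componentwise in `Z_q`. -/
def derivV (q ℓ : ℕ) (x : List (ZMod q)) : List (ZMod q) :=
  List.zipWith (· - ·) (x.drop ℓ) x

/-- Hamming weight: the number of nonzero entries. -/
def wtH {q : ℕ} (v : List (ZMod q)) : ℕ := (v.filter (fun a => a ≠ 0)).length

/-- The lengths `(m_0, m_1, …, m_p)` of the (possibly empty) maximal zero runs of `v`,
where `v = (0^{m_0}, w_1, 0^{m_1}, w_2, …, w_p, 0^{m_p})` with all `w_i ≠ 0`. -/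
def zeroRunLengths {q : ℕ} : List (ZMod q) → List ℕ
  | [] => [0]
  | a :: rest =>
    let t := zeroRunLengths rest
    if a = 0 then
      match t with
      | [] => [1]
      | m :: ms => (m + 1) :: ms
    else 0 :: t

/-- The `ℓ`-zero signature `σ_ℓ(v) = (⌊m_0/ℓ⌋, …, ⌊m_p/ℓ⌋)` of `v = derivV q ℓ x`. -/
def sig (q ℓ : ℕ) (x : List (ZMod q)) : List ℕ :=
  (zeroRunLengths (derivV q ℓ x)).map (· / ℓ)

/-- The trunk `μ_ℓ(v)`: every maximal zero run of length `m` is shortened to length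
`m mod ℓ`. -/
def trunk (q ℓ : ℕ) (v : List (ZMod q)) : List (ZMod q) :=
  ((runs v).map (fun r =>
    if r.head? = some (0 : ZMod q) then List.replicate (r.length % ℓ) (0 : ZMod q) else r)).flatten

/-- The root `ρ_ℓ(x) = (u, μ_ℓ(v))` where `φ_ℓ(x) = (u, v)` is the `ℓ`-step derivative. -/
def root (q ℓ : ℕ) (x : List (ZMod q)) : List (ZMod q) × List (ZMod q) :=
  (x.take ℓ, trunk q ℓ (derivV q ℓ x))

/-- `ℓ1`-distance of two lists of naturals. -/
def l1diff (a b : List ℕ) : ℕ := (List.zipWith (fun s t => max s t - min s t) a b).sum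

/-- The tandem duplication distance `d_{τ,ℓ}`. -/
def tdDist (q ℓ : ℕ) (x₁ x₂ : List (ZMod q)) : ℕ∞ :=
  if root q ℓ x₁ = root q ℓ x₂ then (l1diff (sig q ℓ x₁) (sig q ℓ x₂) : ℕ∞) else ⊤

/-- The palindromic duplication `π_{i,ℓ}(x) = (u v v^R w)` at position `i`,
where `x = (u v w)`, `|u| = i`, `|v| = ℓ`. -/
def pdupAt (i ℓ : ℕ) (x : List α) : List α :=
  x.take (i + ℓ) ++ ((x.drop i).take ℓ).reverse ++ x.drop (i + ℓ)

/-- The result `(u v w)` of the palindromic deletion `π^δ_{i,ℓ}` applied to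
`x = (u v v^R w)` with `|u| = i`, `|v| = ℓ`. -/
def pdelAt (i ℓ : ℕ) (x : List α) : List α :=
  x.take (i + ℓ) ++ x.drop (i + 2 * ℓ)

/-- The palindromic deletion `π^δ_{i,ℓ}` is defined at position `i` of `x`, i.e. `x` has the
form `(u v v^R w)` with `|u| = i` and `|v| = ℓ`. -/
def PDelDefinedAt (q ℓ i : ℕ) (x : List (ZMod q)) : Prop :=
  ∃ u v w : List (ZMod q), u.length = i ∧ v.length = ℓ ∧ x = u ++ v ++ v.reverse ++ w

/-- `A(n', ℓ', ω)`: the number of words in `Z_q^{n'}` whose maximal zero runs all have length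
at most `ℓ'` and whose Hamming weight is `ω`. -/
noncomputable def Acount (q n' ℓ' ω : ℕ) : ℕ :=
  {x : Fin n' → ZMod q | wtH (List.ofFn x) = ω ∧
    ∀ r ∈ runs (List.ofFn x), r.head? = some (0 : ZMod q) → r.length ≤ ℓ'}.ncard

/-- Integer binomial coefficient with the conventions `C(a,b) = 0` for `a ≥ 0 > b` or
`0 ≤ a < b`, `C(-1,-1) = 1`, and `C(a,-1) = 0` for `a ≥ 0`. -/
def ichoose (a b : ℤ) : ℕ :=
  if a = -1 ∧ b = -1 then 1
  else if 0 ≤ a ∧ 0 ≤ b then Nat.choose a.toNat b.toNat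
  else 0

/-- `r^{(0)}(A^π_ℓ(x))`: the number of maximal blocks of consecutive all-zero columns of the
matrix `A^π_ℓ(x) ∈ Z_q^{ℓ × (n−2ℓ+1)}` whose entry in row `s` and column `c`
(`1 ≤ s ≤ ℓ`, `1 ≤ c ≤ n−2ℓ+1`) is `x_{2ℓ+c−s} − x_{c+s−1}`. -/
def zeroColBlocks (q ℓ n : ℕ) (x : List (ZMod q)) : ℕ :=
  ((runs ((List.range (n - 2 * ℓ + 1)).map (fun c =>
      (List.range ℓ).all (fun s =>
        x.getD (2 * ℓ + c - s - 1) (0 : ZMod q) = x.getD (c + s) (0 : ZMod q))))).filter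
    (fun r => r.head? = some true)).length

/-- The total excess of the run lengths over `ℓ`; truncated subtraction makes runs of length
at most `ℓ` contribute nothing. -/
def excess [DecidableEq α] (ℓ : ℕ) (x : List α) : ℕ :=
  ((runs x).map (fun r => r.length - ℓ)).sum

theorem flatten_runs [DecidableEq α] (x : List α) : (runs x).flatten = x := by
  induction x with
  | nil => simp [runs]
  | cons a t ih =>
    rw [runs]
    split
    · rename_i h
      rw [h] at ih
      simpa using ih
    · rename_i r rs h
      rw [h] at ih
      split
      · simpa using ih
      · simpa using ih

theorem eq_replicate_of_mem_runs [DecidableEq α] (x : List α) :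
    ∀ r ∈ runs x, ∀ a, r.head? = some a → r = List.replicate r.length a := by
  induction x with
  | nil => simp [runs]
  | cons a t ih =>
    rw [runs]
    split
    · simp
    · rename_i r rs h
      rw [h] at ih
      split
      · rename_i hr
        intro s hs b hb
        rcases List.mem_cons.1 hs with rfl | hs
        · simp only [List.head?_cons, Option.some.injEq] at hb
          subst hb
          have := ih r (by simp) a hr
          rw [List.length_cons, List.replicate_succ, ← this]
        · exact ih s (by simp [hs]) b hb
      · intro s hs b hb
        rcases List.mem_cons.1 hs with rfl | hs
        · simpa using hb
        · exact ih s hs b hb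

theorem length_le_of_mem_runs [DecidableEq α] {x r : List α} (hr : r ∈ runs x) :
    r.length ≤ x.length := by
  have h := (List.sublist_flatten_of_mem hr).length_le
  rwa [flatten_runs] at h

theorem pdup_nil {ℓ : ℕ} (hℓ : 1 ≤ ℓ) (y : List α) : ¬ PDup ℓ [] y := by
  rintro ⟨u, v, w, hv, hx, -⟩
  have := congrArg List.length hx
  simp at this
  omega

theorem PDup.le_length {ℓ : ℕ} {x y : List α} (h : PDup ℓ x y) : ℓ ≤ x.length := by
  obtain ⟨u, v, w, hv, rfl, -⟩ := h
  simp
  omega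

theorem pdup_cons {ℓ : ℕ} {a : α} {t y : List α} (h : PDup ℓ (a :: t) y) :
    y = (a :: t).take ℓ ++ ((a :: t).take ℓ).reverse ++ (a :: t).drop ℓ ∨
      y ∈ (List.cons a) '' {z | PDup ℓ t z} := by
  obtain ⟨u, v, w, hv, hx, rfl⟩ := h
  cases u with
  | nil =>
    left
    simp only [List.nil_append] at hx
    rw [hx, ← hv]
    simp
  | cons b u =>
    right
    simp only [List.cons_append, List.cons.injEq] at hx
    obtain ⟨rfl, rfl⟩ := hx
    exact ⟨u ++ v ++ v.reverse ++ w, ⟨u, v, w, hv, rfl, rfl⟩, by simp⟩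

/-- If a word starts with `ℓ + 1` equal letters, every palindromic duplication of it leaves its
first letter in place and duplicates inside the remaining word. -/
theorem pdup_cons_of_run {ℓ : ℕ} {a : α} {w y : List α}
    (h : PDup ℓ (a :: (List.replicate ℓ a ++ w)) y) :
    y ∈ (List.cons a) '' {z | PDup ℓ (List.replicate ℓ a ++ w) z} := by
  rcases pdup_cons h with rfl | h
  · refine ⟨List.replicate ℓ a ++ List.replicate ℓ a ++ w,
      ⟨[], List.replicate ℓ a, w, by simp, by simp, by simp⟩, ?_⟩
    have e : ∀ s : List α, a :: (List.replicate ℓ a ++ s) = List.replicate ℓ a ++ (a :: s) := by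
      intro s
      rw [← List.cons_append, ← List.replicate_succ, List.replicate_succ']
      simp
    rw [e w, List.take_left' (by simp), List.drop_left' (by simp), List.reverse_replicate,
      List.append_assoc, List.append_assoc, ← e w, ← e]
  · exact h

theorem finite_pdup {ℓ : ℕ} (hℓ : 1 ≤ ℓ) (x : List α) : {y | PDup ℓ x y}.Finite := by
  induction x with
  | nil => simp [pdup_nil hℓ]
  | cons a t ih =>
    refine ((ih.image (List.cons a)).insert
      ((a :: t).take ℓ ++ ((a :: t).take ℓ).reverse ++ (a :: t).drop ℓ)).subset ?_
    intro y hy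
    exact pdup_cons hy

/-- Prepending a letter either leaves the excess unchanged, or makes the first run longer than
`ℓ` and increases the excess by one. -/
theorem excess_cons [DecidableEq α] {ℓ : ℕ} (hℓ : 1 ≤ ℓ) (a : α) (t : List α) :
    excess ℓ (a :: t) = excess ℓ t ∨
      (excess ℓ (a :: t) = excess ℓ t + 1 ∧ ∃ w, t = List.replicate ℓ a ++ w) := by
  have hf := flatten_runs t
  have hm := eq_replicate_of_mem_runs t
  unfold excess
  rw [runs]
  split
  · rename_i h
    left
    rw [h]
    simp
    omega
  · rename_i r rs h
    rw [h] at hf hm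
    split
    · rename_i hr
      have hrep := hm r (by simp) a hr
      by_cases hl : ℓ ≤ r.length
      · right
        refine ⟨by rw [h]; simp; omega, List.replicate (r.length - ℓ) a ++ rs.flatten, ?_⟩
        rw [← List.append_assoc, List.replicate_append_replicate, Nat.add_sub_cancel' hl,
          ← hrep, ← hf]
        simp
      · left
        rw [h]
        simp
        omega
    · left
      rw [h]
      simp
      omega

theorem ncard_pdup_add_excess [DecidableEq α] {ℓ : ℕ} (hℓ : 1 ≤ ℓ) (x : List α) :
    {y | PDup ℓ x y}.ncard + excess ℓ x ≤ x.length + 1 - ℓ := by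
  induction x with
  | nil => simp [pdup_nil hℓ, excess, runs]
  | cons a t ih =>
    have hfin := (finite_pdup hℓ t).image (List.cons a)
    have himg : ((List.cons a) '' {z | PDup ℓ t z}).ncard = {z | PDup ℓ t z}.ncard :=
      Set.ncard_image_of_injective _ (List.cons_injective)
    rw [List.length_cons]
    rcases excess_cons hℓ a t with he | ⟨he, w, rfl⟩
    · by_cases hl : ℓ ≤ t.length + 1
      · have h1 : {y | PDup ℓ (a :: t) y}.ncard ≤
            (insert ((a :: t).take ℓ ++ ((a :: t).take ℓ).reverse ++ (a :: t).drop ℓ)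
              ((List.cons a) '' {z | PDup ℓ t z})).ncard :=
          Set.ncard_le_ncard (fun y hy => pdup_cons hy) (hfin.insert _)
        have h2 := Set.ncard_insert_le
          ((a :: t).take ℓ ++ ((a :: t).take ℓ).reverse ++ (a :: t).drop ℓ)
          ((List.cons a) '' {z | PDup ℓ t z})
        omega
      · have h0 : {y | PDup ℓ (a :: t) y} = ∅ := by
          refine Set.eq_empty_of_forall_notMem fun y hy => ?_
          exact hl (PDup.le_length hy)
        rw [h0, Set.ncard_empty]
        omega
    · have h1 : {y | PDup ℓ (a :: (List.replicate ℓ a ++ w)) y}.ncard ≤ _ :=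
        Set.ncard_le_ncard (fun y hy => pdup_cons_of_run hy) hfin
      have h2 : ℓ ≤ (List.replicate ℓ a ++ w).length := by simp
      omega

/-- Grouping the terms of the excess by length. -/
theorem sum_length_eq (ℓ n : ℕ) (L : List (List α)) (hL : ∀ r ∈ L, r.length ≤ n) :
    ∑ i ∈ Finset.Icc (ℓ + 1) n,
        ((i : ℤ) - ℓ) * (((L.filter (fun r => r.length = i)).length : ℕ) : ℤ) =
      ((L.map (fun r => r.length - ℓ)).sum : ℕ) := by
  induction L with
  | nil => simp
  | cons r L ih =>
    have ih := ih (fun s hs => hL s (by simp [hs]))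
    have hr := hL r (by simp)
    have key : ∀ i : ℕ, ((i : ℤ) - ℓ) *
        ((((r :: L).filter (fun r => r.length = i)).length : ℕ) : ℤ) =
        (if r.length = i then ((i : ℤ) - ℓ) else 0) +
        ((i : ℤ) - ℓ) * (((L.filter (fun r => r.length = i)).length : ℕ) : ℤ) := by
      intro i
      by_cases h : r.length = i
      · simp [h]
        ring
      · simp [h]
    rw [Finset.sum_congr rfl (fun i _ => key i), Finset.sum_add_distrib, ih, Finset.sum_ite_eq,
      List.map_cons, List.sum_cons, Nat.cast_add]
    congr 1
    split
    · rename_i h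
      rw [Finset.mem_Icc] at h
      omega
    · rename_i h
      rw [Finset.mem_Icc] at h
      omega

theorem sphere_one_subset (ℓ : ℕ) (x : List α) :
    sphere (PDup ℓ) 1 x ⊆ insert x {y | PDup ℓ x y} := by
  rintro y ⟨k, hk, h⟩
  interval_cases k
  · left
    exact h.symm
  · right
    obtain ⟨z, hz, rfl⟩ := h
    exact hz

/-- Upper bound on the single palindromic duplication sphere:
`|S_{π,ℓ}(x)| ≤ n − ℓ + 2 − Σ_{i=ℓ+1}^n (i−ℓ) r_i(x)`. -/
theorem stmt9 (q ℓ n : ℕ) (hq : 2 ≤ q) (hℓ : 1 ≤ ℓ) (hn : ℓ ≤ n)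
    (x : List (ZMod q)) (hx : x.length = n) :
    ((sphere (PDup ℓ) 1 x).ncard : ℤ)
        ≤ (n : ℤ) - ℓ + 2 - ∑ i ∈ Finset.Icc (ℓ + 1) n, ((i : ℤ) - ℓ) * (numRunsEq x i : ℤ) := by
  have h1 := Set.ncard_le_ncard (sphere_one_subset ℓ x) ((finite_pdup hℓ x).insert x)
  have h2 := Set.ncard_insert_le x {y | PDup ℓ x y}
  have h3 := ncard_pdup_add_excess hℓ x
  have h4 := sum_length_eq ℓ n (runs x) (fun r hr => hx ▸ length_le_of_mem_runs hr)
  unfold numRunsEq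
  rw [h4]
  unfold excess at h3
  omega

end DupPaper
end

section
/- For every integer n ≥ 2 and every binary word x ∈ Z_2^n, the size of the single palindromic deletion sphere for deletion length ℓ = 2 satisfies |S_{π^δ,2}(x)| = r_{I,2}(x) + r_{≥4}(x) + 1, where r_{I,2}(x) is the number of runs of x of length exactly 2 located in the interior of x (i.e., entirely between positions 2 and n−1, touching neither the first nor the last position) and r_{≥4}(x) is the number of runs of x of length at least 4. -/
/-!
Both sides are computed by reading the word from the left. Let `D(x)` be the set of words obtained
from `x` by exactly one deletion. A deletion in `a :: x` either takes place inside `x`, or at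
position `0`, where it needs `a :: x = a b b a w` and produces `a b w`. The latter word is already
obtained inside `x` exactly when `a :: x` starts with `aaaaa` (`PDel_shift`). Hence `|D(a :: x)|`
exceeds `|D(x)|` by `1` if `a :: x` starts with `abba` but not with `aaaaa`, and by `0` otherwise
(`ncard_cons`).

The quantity `r_{I,2} + r_{≥4}` satisfies the same recursion over a binary alphabet
(`count_cons`): prepending `a` creates a run of length `4` when the word starts with `aaaa` but not
`aaaaa`, and turns the initial run `bb` into an interior one when the word starts with `abba`,
`a ≠ b`. Finally the sphere is `D(x)` together with `x`, and `x ∉ D(x)` for length reasons.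
-/

namespace DupPaper

variable {α : Type*}

/-- A deletion of length `2` in `a :: x` happens either inside `x` or at position `0`. -/
lemma PDel_cons {α : Type*} (a : α) (x y : List α) :
    PDel 2 (a :: x) y ↔ (∃ y', PDel 2 x y' ∧ a :: y' = y) ∨
      ∃ b w, x = b :: b :: a :: w ∧ y = a :: b :: w := by
  constructor
  · rintro ⟨u, v, w, hv, hx, rfl⟩
    cases u with
    | nil =>
      obtain ⟨c, d, rfl⟩ := List.length_eq_two.mp hv
      simp only [List.nil_append, List.cons_append, List.reverse_cons, List.reverse_nil,
        List.cons.injEq] at hx ⊢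
      obtain ⟨rfl, rfl⟩ := hx
      exact Or.inr ⟨d, w, by simp⟩
    | cons c u =>
      simp only [List.cons_append, List.cons.injEq] at hx
      obtain ⟨rfl, rfl⟩ := hx
      exact Or.inl ⟨_, ⟨u, v, w, hv, rfl, rfl⟩, by simp⟩
  · rintro (⟨y', ⟨u, v, w, hv, rfl, rfl⟩, rfl⟩ | ⟨b, w, rfl, rfl⟩)
    · exact ⟨a :: u, v, w, hv, by simp, by simp⟩
    · exact ⟨[], [a, b], w, rfl, by simp, by simp⟩

lemma not_PDel_nil {α : Type*} (y : List α) : ¬ PDel 2 [] y := by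
  rintro ⟨u, v, w, hv, hx, -⟩
  have := congrArg List.length hx
  simp at this
  omega

/-- A deletion that merely removes the first two symbols takes place in an initial run of length
at least `4`. -/
lemma PDel_tail {α : Type*} (w : List α) : ∀ p q : α, PDel 2 (p :: q :: w) w →
    p = q ∧ ∃ w', w = p :: p :: w' := by
  induction w with
  | nil =>
    intro p q h
    rw [PDel_cons] at h
    simp at h
  | cons c w ih =>
    intro p q h
    rw [PDel_cons] at h
    rcases h with ⟨y', h, h'⟩ | ⟨b, w2, h, h'⟩
    · simp only [List.cons.injEq] at h'
      obtain ⟨rfl, rfl⟩ := h'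
      obtain ⟨rfl, w', rfl⟩ := ih _ _ h
      exact ⟨rfl, _, rfl⟩
    · simp only [List.cons.injEq] at h h'
      obtain ⟨rfl, rfl, rfl⟩ := h
      obtain ⟨rfl, -⟩ := h'
      exact ⟨rfl, _, rfl⟩

/-- The result of the deletion at position `0` of `a b b a w` is also the result of a later
deletion exactly when the word starts with `aaaaa`. -/
lemma PDel_shift {α : Type*} (a b : α) (w : List α) :
    PDel 2 (b :: b :: a :: w) (b :: w) ↔ b = a ∧ ∃ w', w = a :: w' := by
  constructor
  · intro h
    rw [PDel_cons] at h
    rcases h with ⟨y', h, h'⟩ | ⟨c, w2, h, h'⟩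
    · simp only [List.cons.injEq, true_and] at h'
      subst h'
      obtain ⟨rfl, w', rfl⟩ := PDel_tail _ _ _ h
      exact ⟨rfl, _, rfl⟩
    · simp only [List.cons.injEq, true_and] at h h'
      obtain ⟨rfl, rfl, rfl⟩ := h
      exact ⟨rfl, _, rfl⟩
  · rintro ⟨rfl, w', rfl⟩
    exact ⟨[], [b, b], w', rfl, by simp, by simp⟩

/-- The words obtained from `x` by exactly one palindromic deletion of length `2`. -/
def D {α : Type*} (x : List α) : Set (List α) := {y | PDel 2 x y}

/-- `a :: x` starts with `abba` for some symbol `b`, but not with `aaaaa`. -/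
def New {α : Type*} (a : α) (x : List α) : Prop :=
  ∃ b w, x = b :: b :: a :: w ∧ ¬ (b = a ∧ ∃ w', w = a :: w')

lemma D_cons_abba {α : Type*} {a b : α} {w : List α} :
    D (a :: b :: b :: a :: w) =
      insert (a :: b :: w) ((a :: ·) '' D (b :: b :: a :: w)) := by
  ext y
  simp only [D, Set.mem_insert_iff, Set.mem_image, Set.mem_ofPred_eq]
  rw [PDel_cons a]
  constructor
  · rintro (h | ⟨b', w', h, rfl⟩)
    · exact Or.inr h
    · simp only [List.cons.injEq] at h
      obtain ⟨rfl, -, -, rfl⟩ := h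
      exact Or.inl rfl
  · rintro (rfl | h)
    · exact Or.inr ⟨b, w, rfl, rfl⟩
    · exact Or.inl h

lemma D_cons_of_not_new {α : Type*} {a : α} {x : List α} (h : ¬ New a x) :
    D (a :: x) = (a :: ·) '' D x := by
  ext y
  simp only [D, Set.mem_image, Set.mem_ofPred_eq]
  rw [PDel_cons a]
  refine or_iff_left_of_imp ?_
  rintro ⟨b, w, rfl, rfl⟩
  refine ⟨b :: w, (PDel_shift a b w).mpr ?_, rfl⟩
  by_contra hc
  exact h ⟨b, w, rfl, hc⟩

lemma D_finite {α : Type*} (x : List α) : (D x).Finite := by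
  induction x with
  | nil =>
    convert Set.finite_empty
    ext y
    simpa [D] using not_PDel_nil y
  | cons a x ih =>
    by_cases h : New a x
    · obtain ⟨b, w, rfl, -⟩ := h
      rw [D_cons_abba]
      exact (ih.image _).insert _
    · rw [D_cons_of_not_new h]
      exact ih.image _

open Classical in
lemma ncard_cons {α : Type*} (a : α) (x : List α) :
    (D (a :: x)).ncard = (D x).ncard + if New a x then 1 else 0 := by
  have hinj : Function.Injective (fun y : List α => a :: y) := List.cons_injective
  split_ifs with h
  · obtain ⟨b, w, rfl, hc⟩ := h
    rw [D_cons_abba, Set.ncard_insert_of_notMem _ ((D_finite _).image _),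
      Set.ncard_image_of_injective _ hinj]
    rintro ⟨y, hy, hyy⟩
    simp only [List.cons.injEq, true_and] at hyy
    subst hyy
    exact hc ((PDel_shift a b w).mp hy)
  · rw [D_cons_of_not_new h, Set.ncard_image_of_injective _ hinj, Nat.add_zero]

lemma runs_cons_eq {α : Type*} [DecidableEq α] (a : α) (x : List α) :
    ∃ r rs, runs (a :: x) = (a :: r) :: rs := by
  rw [runs]
  split
  · exact ⟨_, _, rfl⟩
  · split_ifs
    · exact ⟨_, _, rfl⟩
    · exact ⟨_, _, rfl⟩

/-- Unfolding `runs` only while two leading symbols are known, so that rewriting stops at the runs of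
a word with one leading symbol, which `runs_cons_eq` describes. -/
lemma runs_cons_cons {α : Type*} [DecidableEq α] (a b : α) (x : List α) :
    runs (a :: b :: x) = match runs (b :: x) with
      | [] => [[a]]
      | r :: rs => if r.head? = some a then (a :: r) :: rs else [a] :: r :: rs := by
  rw [runs]

open Classical in
/-- The right-hand side obeys the recursion of `ncard_cons`; this is where the alphabet has to be
binary, since an interior run `bb` must have equal neighbours. -/
lemma count_cons (a : ZMod 2) (x : List (ZMod 2)) :
    numInteriorRuns2 (a :: x) + numRunsGe (a :: x) 4 =
      numInteriorRuns2 x + numRunsGe x 4 + if New a x then 1 else 0 := by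
  have two : ∀ a : ZMod 2, a = 0 ∨ a = 1 := by decide
  rcases x with _ | ⟨b, _ | ⟨c, _ | ⟨d, _ | ⟨e, t⟩⟩⟩⟩
  · simp [numInteriorRuns2, numRunsGe, New, runs]
  · rcases two a with rfl | rfl <;> rcases two b with rfl | rfl <;>
      simp [numInteriorRuns2, numRunsGe, New, runs]
  · rcases two a with rfl | rfl <;> rcases two b with rfl | rfl <;> rcases two c with rfl | rfl <;>
      simp [numInteriorRuns2, numRunsGe, New, runs]
  · rcases two a with rfl | rfl <;> rcases two b with rfl | rfl <;> rcases two c with rfl | rfl <;>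
      rcases two d with rfl | rfl <;>
      simp [numInteriorRuns2, numRunsGe, New, runs]
  · obtain ⟨r, rs, h⟩ := runs_cons_eq e t
    rcases two a with rfl | rfl <;> rcases two b with rfl | rfl <;> rcases two c with rfl | rfl <;>
      rcases two d with rfl | rfl <;> rcases two e with rfl | rfl <;>
      rcases rs with _ | ⟨s, rs⟩ <;>
      simp [numInteriorRuns2, numRunsGe, New, runs_cons_cons, h, List.filter_cons] <;> grind

lemma ncard_D (x : List (ZMod 2)) :
    (D x).ncard = numInteriorRuns2 x + numRunsGe x 4 := by
  induction x with
  | nil =>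
    have : D ([] : List (ZMod 2)) = ∅ := by
      ext y
      simpa [D] using not_PDel_nil y
    simp [this, numInteriorRuns2, numRunsGe, runs]
  | cons a x ih => rw [ncard_cons, count_cons, ih]

lemma sphere_eq {α : Type*} (x : List α) : sphere (PDel 2) 1 x = insert x (D x) := by
  ext y
  simp only [sphere, Set.mem_ofPred_eq, Set.mem_insert_iff, D]
  constructor
  · rintro ⟨k, hk, h⟩
    interval_cases k
    · exact Or.inl h.symm
    · obtain ⟨z, hz, rfl⟩ := h
      exact Or.inr hz
  · rintro (rfl | h)
    · exact ⟨0, by omega, rfl⟩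
    · exact ⟨1, le_rfl, y, h, rfl⟩

lemma self_notMem_D {α : Type*} (x : List α) : x ∉ D x := by
  rintro ⟨u, v, w, hv, hx, hy⟩
  have h1 := congrArg List.length hx
  have h2 := congrArg List.length hy
  simp only [List.length_append, List.length_reverse] at h1 h2
  omega

/-- The size of the single palindromic deletion sphere for `ℓ = 2` over `Z_2`:
`|S_{π^δ,2}(x)| = r_{I,2}(x) + r_{≥4}(x) + 1`. -/
theorem stmt11 (n : ℕ) (hn : 2 ≤ n) (x : List (ZMod 2)) (hx : x.length = n) :
    (sphere (PDel 2) 1 x).ncard = numInteriorRuns2 x + numRunsGe x 4 + 1 := by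
  rw [sphere_eq, Set.ncard_insert_of_notMem (self_notMem_D x) (D_finite x), ncard_D]

end DupPaper
end

section
/- For all integers q ≥ 2, ℓ ≥ 1, n ≥ 2ℓ and every x ∈ Z_q^n, the size of the single palindromic deletion sphere satisfies |S_{π^δ,ℓ}(x)| ≤ r^{(0)}(A^π_ℓ(x)) + 1, where A^π_ℓ(x) ∈ Z_q^{ℓ×(n−2ℓ+1)} is the matrix whose entry in row s (1 ≤ s ≤ ℓ) and column c (1 ≤ c ≤ n−2ℓ+1) equals x_{2ℓ+c−s} − x_{c+s−1} (so column c is (x_{2ℓ+c−1}−x_c, x_{2ℓ+c−2}−x_{c+1}, …, x_{ℓ+c}−x_{ℓ+c−1})), and r^{(0)}(A^π_ℓ(x)) is the number of maximal blocks of consecutive all-zero columns of A^π_ℓ(x). -/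
/-!
Column `c` of the matrix is zero exactly when the window `x_c, …, x_{c+2ℓ-1}` is a palindrome,
i.e. when a palindromic deletion is defined at position `c`. If the windows at `c` and at `c + 1`
are both palindromes, reflecting alternately in the two centres shows that the `2ℓ + 1` symbols
they cover all agree (`eq_of_two_palindromes`), so the two deletions give the same word
(`pdelAt_eq_succ`). Hence the result of a deletion depends only on the block of zero columns
containing its position, and there are at most as many results as blocks
(`exists_finset_of_runs`); the word `x` itself contributes the additional `1`.
-/

namespace DupPaper

variable {α : Type*}

lemma runs_head {α : Type*} [DecidableEq α] (a : α) (L : List α) :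
    ∃ r rs, runs (a :: L) = (a :: r) :: rs := by
  simp only [runs]
  split
  · exact ⟨[], [], rfl⟩
  · split
    · exact ⟨_, _, rfl⟩
    · exact ⟨[], _, rfl⟩

/-- A function on positions that agrees at adjacent `true` entries of `L` takes at most one value
per maximal block of `true`. -/
lemma exists_finset_of_runs {β : Type*} (L : List Bool) :
    ∀ g : ℕ → β,
      (∀ i, L[i]? = some true → L[i + 1]? = some true → g i = g (i + 1)) →
      ∃ F : Finset β, F.card ≤ ((runs L).filter (fun r => r.head? = some true)).length ∧
        ∀ i, L[i]? = some true → g i ∈ F := by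
  classical
  induction L with
  | nil => intro g _; exact ⟨∅, by simp, by simp⟩
  | cons a L ih =>
    intro g hg
    obtain ⟨F, hF, hm⟩ := ih (fun i => g (i + 1)) (fun i h1 h2 => hg (i + 1) (by simpa) (by simpa))
    cases L with
    | nil =>
      refine ⟨if a then {g 0} else ∅, ?_, ?_⟩
      · cases a <;> simp [runs]
      · intro i hi
        cases i <;> simp_all
    | cons b L =>
      obtain ⟨r, rs, hr⟩ := runs_head b L
      have hc : runs (a :: b :: L) =
          if some b = some a then (a :: b :: r) :: rs else [a] :: (b :: r) :: rs := by
        rw [runs, hr]; simp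
      rw [hr] at hF
      rw [hc]
      cases a with
      | false =>
        refine ⟨F, hF.trans ?_, ?_⟩
        · cases b <;> simp
        · intro i hi
          cases i with
          | zero => simp at hi
          | succ i => exact hm i (by simpa using hi)
      | true =>
        cases b with
        | true =>
          refine ⟨F, by simpa using hF, ?_⟩
          intro i hi
          cases i with
          | zero => rw [hg 0 (by simp) (by simp)]; exact hm 0 (by simp)
          | succ i => exact hm i (by simpa using hi)
        | false =>
          refine ⟨insert (g 0) F, ?_, ?_⟩
          · refine (Finset.card_insert_le _ _).trans ?_
            simpa using hF
          · intro i hi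
            cases i with
            | zero => simp
            | succ i => exact Finset.mem_insert_of_mem (hm i (by simpa using hi))

/-- Two palindromes of length `2ℓ` at consecutive positions `c`, `c + 1` force all symbols of their
union to agree; only the equality of the last symbol with the middle one is recorded. -/
lemma eq_of_two_palindromes {α : Type*} (f : ℕ → α) (ℓ c : ℕ)
    (h0 : ∀ s < ℓ, f (2 * ℓ + c - s - 1) = f (c + s))
    (h1 : ∀ s < ℓ, f (2 * ℓ + (c + 1) - s - 1) = f (c + 1 + s)) :
    f (c + 2 * ℓ) = f (c + ℓ) := by
  have key : ∀ k ≤ ℓ, f (c + ℓ + k) = f (c + ℓ) ∧ f (c + ℓ - k) = f (c + ℓ) := by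
    intro k
    induction k with
    | zero => simp
    | succ k ih =>
      intro hk
      obtain ⟨ha, hb⟩ := ih (by omega)
      have e0 := h0 (ℓ - 1 - k) (by omega)
      have e1 := h1 (ℓ - 1 - k) (by omega)
      rw [show 2 * ℓ + c - (ℓ - 1 - k) - 1 = c + ℓ + k by omega,
        show c + (ℓ - 1 - k) = c + ℓ - (k + 1) by omega] at e0
      rw [show 2 * ℓ + (c + 1) - (ℓ - 1 - k) - 1 = c + ℓ + (k + 1) by omega,
        show c + 1 + (ℓ - 1 - k) = c + ℓ - k by omega] at e1
      exact ⟨e1.trans hb, e0.symm.trans ha⟩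
  have := (key ℓ le_rfl).1
  rwa [show c + ℓ + ℓ = c + 2 * ℓ by omega] at this

lemma pdelAt_eq_succ {α : Type*} (d : α) (x : List α) (ℓ c : ℕ) (hℓ : 1 ≤ ℓ)
    (hc : c + 1 + 2 * ℓ ≤ x.length)
    (h0 : ∀ s < ℓ, x.getD (2 * ℓ + c - s - 1) d = x.getD (c + s) d)
    (h1 : ∀ s < ℓ, x.getD (2 * ℓ + (c + 1) - s - 1) d = x.getD (c + 1 + s) d) :
    pdelAt c ℓ x = pdelAt (c + 1) ℓ x := by
  have h := eq_of_two_palindromes (fun i => x.getD i d) ℓ c h0 h1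
  have l1 : c + 2 * ℓ < x.length := by omega
  have l2 : c + ℓ < x.length := by omega
  simp only [List.getD_eq_getElem _ _ l1, List.getD_eq_getElem _ _ l2] at h
  unfold pdelAt
  rw [List.drop_eq_getElem_cons l1, show c + 1 + ℓ = c + ℓ + 1 by omega,
    List.take_succ_eq_append_getElem l2, h, show c + 1 + 2 * ℓ = c + 2 * ℓ + 1 by omega,
    List.append_assoc, List.singleton_append]

lemma getD_palindrome {α : Type*} (d : α) (u v w : List α) (s : ℕ) (hs : s < v.length) :
    (u ++ v ++ v.reverse ++ w).getD (2 * v.length + u.length - s - 1) d =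
      (u ++ v ++ v.reverse ++ w).getD (u.length + s) d := by
  simp only [List.getD_eq_getElem?_getD]
  congr 1
  rw [List.getElem?_append_left (by simp; omega), List.getElem?_append_right (by simp; omega),
    List.getElem?_append_left (by simp; omega), List.getElem?_append_left (by simp; omega),
    List.getElem?_append_right (by simp),
    List.getElem?_reverse (by simp; omega)]
  congr 1
  simp
  omega

/-- Upper bound on the single palindromic deletion sphere:
`|S_{π^δ,ℓ}(x)| ≤ r^{(0)}(A^π_ℓ(x)) + 1`. -/
theorem stmt12 (q ℓ n : ℕ) (hq : 2 ≤ q) (hℓ : 1 ≤ ℓ) (hn : 2 * ℓ ≤ n)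
    (x : List (ZMod q)) (hx : x.length = n) :
    (sphere (PDel ℓ) 1 x).ncard ≤ zeroColBlocks q ℓ n x + 1 := by
  classical
  unfold zeroColBlocks
  set L := (List.range (n - 2 * ℓ + 1)).map (fun c =>
      (List.range ℓ).all (fun s =>
        x.getD (2 * ℓ + c - s - 1) (0 : ZMod q) = x.getD (c + s) (0 : ZMod q))) with hL
  have hLi : ∀ c, L[c]? = some true ↔ c < n - 2 * ℓ + 1 ∧
      ∀ s < ℓ, x.getD (2 * ℓ + c - s - 1) 0 = x.getD (c + s) 0 := by
    intro c
    by_cases hc : c < n - 2 * ℓ + 1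
    · rw [hL, List.getElem?_map, List.getElem?_range hc]
      simp [-List.getD_eq_getElem?_getD, hc]
    · rw [hL, List.getElem?_eq_none (by simpa using hc)]
      simp [hc]
  obtain ⟨F, hF, hm⟩ := exists_finset_of_runs L (fun c => pdelAt c ℓ x) (by
    intro c h0 h1
    rw [hLi] at h0 h1
    exact pdelAt_eq_succ 0 x ℓ c hℓ (by omega) h0.2 h1.2)
  have hsub : sphere (PDel ℓ) 1 x ⊆ ((insert x F : Finset _) : Set (List (ZMod q))) := by
    rintro y ⟨k, hk, hy⟩
    rw [Finset.mem_coe, Finset.mem_insert]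
    interval_cases k
    · left; exact (show x = y from hy).symm
    · right
      obtain ⟨z, ⟨u, v, w, hv, hxe, hz⟩, hzy⟩ := hy
      obtain rfl : z = y := hzy
      have hlen : u.length + 2 * ℓ ≤ n := by
        rw [← hx, hxe]; simp; omega
      have hzp : z = pdelAt u.length ℓ x := by
        have e1 : u.length + ℓ = (u ++ v).length := by simp [hv]
        have e2 : u.length + 2 * ℓ = (u ++ v ++ v.reverse).length := by simp [hv]; omega
        unfold pdelAt
        rw [hz, hxe, e2, List.drop_left, e1, List.append_assoc (u ++ v), List.take_left]
      rw [hzp]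
      refine hm u.length ((hLi _).2 ⟨by omega, fun s hs => ?_⟩)
      subst hv
      rw [hxe]
      exact getD_palindrome 0 u v w s hs
  calc (sphere (PDel ℓ) 1 x).ncard ≤ (insert x F).card := by
        rw [← Set.ncard_coe_finset]
        exact Set.ncard_le_ncard hsub (Finset.finite_toSet _)
    _ ≤ F.card + 1 := Finset.card_insert_le _ _
    _ ≤ _ := Nat.add_le_add_right hF 1

end DupPaper
end

section
/- For all integers q ≥ 2, ℓ ≥ 1 and n ≥ 2ℓ, every code C ⊆ Z_q^n that is single tandem-duplication correcting for duplications of length ℓ satisfies |C| ≤ Σ_{x ∈ Z_q^n} 1/|S_{τ^δ,ℓ}(x)| + Σ_{x' ∈ Z_q^{n−ℓ}} 1/|S_{τ^δ,ℓ}(x')| (the generalized sphere packing bound). -/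
/-!
Give a word `y` the weight `1 / |S(y)|`, where `S` denotes the sphere of at most one tandem
deletion. The bound is the statement that the deletion spheres of the codewords are disjoint
subsets of the words of length `n` and `n - ℓ`, each of total weight at least `1`.

*Disjointness* (`disjoint_tdel_spheres`). If `c₁` and `c₂` have a common deletion `z`, both are
duplications of `z`. Duplications commute (`dupAt_comm`), so `c₁` and `c₂` have a common
duplication, and the correcting property forces `c₁ = c₂`.

*Weight* (`one_le_sum_sphere`). It suffices that `|S(y)| ≤ |S(c)|` for `y ∈ S(c)`. Tandem
deletions of `x` that take place within one maximal `ℓ`-periodic stretch all give the same word,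
and those in different stretches give different words, so `|S(x)|` is one more than the number of
left ends of stretches containing a tandem repeat (`sphere_tdel_ncard`). A deletion cannot
increase this number (`card_starts_delAt_le`).
-/

namespace DupPaper

variable {α : Type*}

/-! ### Deletions by position -/

/-- The word `x` with the `ℓ` symbols at positions `i, …, i + ℓ - 1` (counted from `0`) removed. -/
def delAt (ℓ i : ℕ) (x : List α) : List α := x.take i ++ x.drop (i + ℓ)

/-- The word `x` with its block of length `ℓ` at position `i` duplicated. -/
def dupAt (ℓ i : ℕ) (x : List α) : List α := x.take (i + ℓ) ++ x.drop i

/-- `x` contains a tandem repeat `v v` with `|v| = ℓ` at position `i`, written entrywise. -/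
def Good (ℓ i : ℕ) (x : List α) : Prop :=
  i + 2 * ℓ ≤ x.length ∧ ∀ k, i ≤ k → k < i + ℓ → x[k + ℓ]? = x[k]?

/-- `x` contains a tandem repeat of length `ℓ` at position `i`, and `i` is the first position of
its maximal `ℓ`-periodic stretch. -/
def Start (ℓ i : ℕ) (x : List α) : Prop :=
  Good ℓ i x ∧ ∀ k, k + 1 = i → x[k + ℓ]? ≠ x[k]?

theorem getElem?_delAt {ℓ i : ℕ} {x : List α} (h : i ≤ x.length) (k : ℕ) :
    (delAt ℓ i x)[k]? = if k < i then x[k]? else x[k + ℓ]? := by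
  unfold delAt
  rw [List.getElem?_append]
  simp only [List.length_take, min_eq_left h, List.getElem?_take, List.getElem?_drop]
  split_ifs with h1
  · rfl
  · congr 1; omega

theorem getElem?_dupAt {ℓ i : ℕ} {x : List α} (h : i + ℓ ≤ x.length) (k : ℕ) :
    (dupAt ℓ i x)[k]? = if k < i + ℓ then x[k]? else x[k - ℓ]? := by
  unfold dupAt
  rw [List.getElem?_append]
  simp only [List.length_take, min_eq_left h, List.getElem?_take, List.getElem?_drop]
  split_ifs with h1
  · rfl
  · congr 1; omega

theorem length_delAt {ℓ i : ℕ} {x : List α} (h : i + ℓ ≤ x.length) :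
    (delAt ℓ i x).length = x.length - ℓ := by
  simp only [delAt, List.length_append, List.length_take, List.length_drop]; omega

theorem length_dupAt {ℓ i : ℕ} {x : List α} (h : i + ℓ ≤ x.length) :
    (dupAt ℓ i x).length = x.length + ℓ := by
  simp only [dupAt, List.length_append, List.length_take, List.length_drop]; omega

theorem tdup_iff {ℓ : ℕ} {x y : List α} :
    TDup ℓ x y ↔ ∃ i, i + ℓ ≤ x.length ∧ y = dupAt ℓ i x := by
  constructor
  · rintro ⟨u, v, w, rfl, rfl, rfl⟩
    refine ⟨u.length, by simp, ?_⟩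
    simp [dupAt, List.take_append]
  · rintro ⟨i, hi, rfl⟩
    refine ⟨x.take i, (x.drop i).take ℓ, x.drop (i + ℓ), by simp; omega, ?_, ?_⟩
    · rw [← List.take_add, List.take_append_drop]
    · rw [← List.take_add, List.append_assoc, ← List.drop_drop, List.take_append_drop, dupAt]

theorem tdel_iff_tdup {ℓ : ℕ} {x y : List α} : TDel ℓ x y ↔ TDup ℓ y x := by
  constructor
  · rintro ⟨u, v, w, h, h1, h2⟩
    exact ⟨u, v, w, h, h2, h1⟩
  · rintro ⟨u, v, w, h, h1, h2⟩
    exact ⟨u, v, w, h, h2, h1⟩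

theorem tdel_iff {ℓ : ℕ} {x y : List α} :
    TDel ℓ x y ↔ ∃ i, Good ℓ i x ∧ y = delAt ℓ i x := by
  rw [tdel_iff_tdup, tdup_iff]
  constructor
  · rintro ⟨i, hi, rfl⟩
    have hl := length_dupAt hi
    refine ⟨i, ⟨by omega, fun k h1 h2 => ?_⟩, ?_⟩
    · rw [getElem?_dupAt hi, getElem?_dupAt hi, if_neg (by omega), if_pos h2]
      congr 1; omega
    · apply List.ext_getElem?
      intro k
      rw [getElem?_delAt (by omega), getElem?_dupAt hi, getElem?_dupAt hi]
      split_ifs <;> first | rfl | omega | (congr 1; omega)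
  · rintro ⟨i, ⟨hi, hp⟩, rfl⟩
    have hl := length_delAt (ℓ := ℓ) (i := i) (x := x) (by omega)
    refine ⟨i, by omega, ?_⟩
    apply List.ext_getElem?
    intro k
    rw [getElem?_dupAt (by omega), getElem?_delAt (by omega), getElem?_delAt (by omega)]
    split_ifs with h1 h2 h3
    · rfl
    · exact (hp k (by omega) h1).symm
    · rw [← hp (k - ℓ) (by omega) (by omega)]
      congr 1; omega
    · congr 1; omega

/-- Two duplications of the same word commute, up to the shift of the later position. -/
theorem dupAt_comm {ℓ i j : ℕ} {z : List α} (hij : i ≤ j) (hj : j + ℓ ≤ z.length) :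
    dupAt ℓ (j + ℓ) (dupAt ℓ i z) = dupAt ℓ i (dupAt ℓ j z) := by
  have h1 := length_dupAt (ℓ := ℓ) (i := i) (x := z) (by omega)
  have h2 := length_dupAt hj
  apply List.ext_getElem?
  intro k
  rw [getElem?_dupAt (by omega), getElem?_dupAt (by omega), getElem?_dupAt (by omega),
    getElem?_dupAt (by omega), getElem?_dupAt (by omega), getElem?_dupAt (by omega)]
  split_ifs <;> first | rfl | omega

theorem tdup_diamond {ℓ : ℕ} {z x y : List α} (hx : TDup ℓ z x) (hy : TDup ℓ z y) :
    ∃ t, TDup ℓ x t ∧ TDup ℓ y t := by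
  rw [tdup_iff] at hx hy
  obtain ⟨i, hi, rfl⟩ := hx
  obtain ⟨j, hj, rfl⟩ := hy
  have h1 := length_dupAt hi
  have h2 := length_dupAt hj
  simp only [tdup_iff]
  rcases le_total i j with h | h
  · exact ⟨_, ⟨j + ℓ, by omega, rfl⟩, ⟨i, by omega, dupAt_comm h hj⟩⟩
  · exact ⟨_, ⟨j, by omega, dupAt_comm h hi⟩, ⟨i + ℓ, by omega, rfl⟩⟩

/-! ### The cardinality of deletion spheres -/

theorem mem_sphere_one {rel : List α → List α → Prop} {x y : List α} :
    y ∈ sphere rel 1 x ↔ y = x ∨ rel x y := by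
  constructor
  · rintro ⟨k, hk, h⟩
    interval_cases k
    · exact Or.inl h.symm
    · obtain ⟨z, h1, h2⟩ := h
      have h3 : z = y := h2
      exact Or.inr (h3 ▸ h1)
  · rintro (rfl | h)
    · exact ⟨0, by omega, rfl⟩
    · exact ⟨1, le_refl _, y, h, rfl⟩

/-- A tandem repeat can be slid to the left end of its maximal `ℓ`-periodic stretch without
changing the result of the deletion. -/
theorem exists_start {ℓ : ℕ} {x : List α} (i : ℕ) (h : Good ℓ i x) :
    ∃ j, Start ℓ j x ∧ delAt ℓ j x = delAt ℓ i x := by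
  induction i with
  | zero => exact ⟨0, ⟨h, fun k hk => by omega⟩, rfl⟩
  | succ i ih =>
    by_cases he : x[i + ℓ]? = x[i]?
    · obtain ⟨hl, hp⟩ := h
      have hg : Good ℓ i x := by
        refine ⟨by omega, fun k h1 h2 => ?_⟩
        rcases eq_or_lt_of_le h1 with rfl | h3
        · exact he
        · exact hp k (by omega) (by omega)
      obtain ⟨j, hj, hd⟩ := ih hg
      refine ⟨j, hj, hd.trans ?_⟩
      apply List.ext_getElem?
      intro k
      rw [getElem?_delAt (by omega), getElem?_delAt (by omega)]
      split_ifs with h1 h2 h3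
      · rfl
      · omega
      · have hk : k = i := by omega
        rw [hk, he]
      · rfl
    · refine ⟨i + 1, ⟨h, fun k hk => ?_⟩, rfl⟩
      have hk' : k = i := by omega
      rwa [hk']

theorem delAt_ne_of_lt {ℓ i j : ℕ} {x : List α} (hij : i < j) (hj : Start ℓ j x) :
    delAt ℓ i x ≠ delAt ℓ j x := by
  intro h
  have hl := hj.1.1
  have h1 := congrArg (fun l => l[j - 1]?) h
  rw [getElem?_delAt (by omega), getElem?_delAt (by omega), if_neg (by omega),
    if_pos (by omega)] at h1
  exact hj.2 (j - 1) (by omega) h1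

open Classical in
/-- The left ends of the maximal `ℓ`-periodic stretches of `x` that hold a tandem repeat. -/
noncomputable def starts (ℓ : ℕ) (x : List α) : Finset ℕ :=
  (Finset.range (x.length + 1)).filter (fun i => Start ℓ i x)

open Classical in
theorem mem_starts {ℓ i : ℕ} {x : List α} : i ∈ starts ℓ x ↔ Start ℓ i x := by
  rw [starts, Finset.mem_filter, Finset.mem_range]
  exact ⟨fun h => h.2, fun h => ⟨by have := h.1.1; omega, h⟩⟩

theorem sphere_tdel_eq (ℓ : ℕ) (x : List α) :
    sphere (TDel ℓ) 1 x = insert x ((fun i => delAt ℓ i x) '' (starts ℓ x : Set ℕ)) := by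
  ext y
  rw [mem_sphere_one, Set.mem_insert_iff, tdel_iff, Set.mem_image]
  refine or_congr Iff.rfl ⟨?_, ?_⟩
  · rintro ⟨i, hi, rfl⟩
    obtain ⟨j, hj, hd⟩ := exists_start i hi
    exact ⟨j, mem_starts.2 hj, hd⟩
  · rintro ⟨i, hi, rfl⟩
    exact ⟨i, (mem_starts.1 hi).1, rfl⟩

theorem sphere_tdel_finite (ℓ : ℕ) (x : List α) : (sphere (TDel ℓ) 1 x).Finite := by
  rw [sphere_tdel_eq]
  exact ((starts ℓ x).finite_toSet.image _).insert _

theorem sphere_tdel_ncard {ℓ : ℕ} (hℓ : 1 ≤ ℓ) (x : List α) :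
    (sphere (TDel ℓ) 1 x).ncard = (starts ℓ x).card + 1 := by
  rw [sphere_tdel_eq, Set.ncard_insert_of_notMem _ ((starts ℓ x).finite_toSet.image _),
    Set.InjOn.ncard_image, Set.ncard_coe_finset]
  · intro i hi j hj h
    rcases lt_trichotomy i j with h1 | h1 | h1
    · exact absurd h (delAt_ne_of_lt h1 (mem_starts.1 hj))
    · exact h1
    · exact absurd h.symm (delAt_ne_of_lt h1 (mem_starts.1 hi))
  · rintro ⟨i, hi, h⟩
    have h1 := (mem_starts.1 hi).1.1
    have h2 := length_delAt (ℓ := ℓ) (i := i) (x := x) (by omega)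
    have h3 : delAt ℓ i x = x := h
    rw [h3] at h2
    omega

/-- A deletion at `j` shortens one periodic stretch by `ℓ` and moves the later ones `ℓ` to the
left, so left ends of the shorter word inject into those of the longer one. -/
theorem card_starts_delAt_le {ℓ j : ℕ} {x : List α} (hj : Start ℓ j x) :
    (starts ℓ (delAt ℓ j x)).card ≤ (starts ℓ x).card := by
  obtain ⟨⟨hl, hp⟩, hs⟩ := hj
  have hlen := length_delAt (ℓ := ℓ) (i := j) (x := x) (by omega)
  have hlo : ∀ k, k < j + ℓ → (delAt ℓ j x)[k]? = x[k]? := by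
    intro k hk
    rw [getElem?_delAt (by omega)]
    split_ifs with h
    · rfl
    · exact hp k (by omega) hk
  have hhi : ∀ k, j ≤ k → (delAt ℓ j x)[k]? = x[k + ℓ]? := by
    intro k hk
    rw [getElem?_delAt (by omega), if_neg (by omega)]
  apply Finset.card_le_card_of_injOn (fun i => if i ≤ j then i else i + ℓ)
  · intro i hi
    obtain ⟨⟨hil, hip⟩, his⟩ := mem_starts.1 (Finset.mem_coe.1 hi)
    rw [hlen] at hil
    rw [Finset.mem_coe, mem_starts]
    dsimp only
    rcases lt_trichotomy i j with h | h | h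
    · rw [if_pos h.le]
      -- A stretch starting strictly before `j` ends before `j`, since `j` is itself a left end.
      have hij : i + ℓ ≤ j := by
        by_contra hcon
        have h1 := hip (j - 1) (by omega) (by omega)
        rw [hlo _ (by omega), hlo _ (by omega)] at h1
        exact hs (j - 1) (by omega) h1
      refine ⟨⟨by omega, fun k h1 h2 => ?_⟩, fun k hk => ?_⟩
      · have h3 := hip k h1 h2
        rwa [hlo _ (by omega), hlo _ (by omega)] at h3
      · have h3 := his k hk
        rwa [hlo _ (by omega), hlo _ (by omega)] at h3
    · rw [if_pos h.le, h]
      exact ⟨⟨hl, hp⟩, hs⟩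
    · rw [if_neg (by omega)]
      refine ⟨⟨by omega, fun k h1 h2 => ?_⟩, fun k hk => ?_⟩
      · have h3 := hip (k - ℓ) (by omega) (by omega)
        rw [hhi _ (by omega), hhi _ (by omega)] at h3
        rwa [show k - ℓ + ℓ = k by omega] at h3
      · have h3 := his (i - 1) (by omega)
        rw [hhi _ (by omega), hhi _ (by omega)] at h3
        rwa [show i - 1 + ℓ = k by omega] at h3
  · intro a _ b _ h
    dsimp only at h
    split_ifs at h <;> omega

theorem sphere_tdel_ncard_mono {ℓ : ℕ} (hℓ : 1 ≤ ℓ) {c y : List α}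
    (hy : y ∈ sphere (TDel ℓ) 1 c) :
    (sphere (TDel ℓ) 1 y).ncard ≤ (sphere (TDel ℓ) 1 c).ncard := by
  rw [sphere_tdel_ncard hℓ, sphere_tdel_ncard hℓ]
  rw [sphere_tdel_eq] at hy
  rcases hy with rfl | ⟨j, hj, rfl⟩
  · exact le_rfl
  · have := card_starts_delAt_le (mem_starts.1 hj)
    simpa using this

theorem length_of_tdel {ℓ : ℕ} {x y : List α} (h : TDel ℓ x y) :
    x.length = y.length + ℓ := by
  obtain ⟨u, v, w, rfl, rfl, rfl⟩ := h
  simp only [List.length_append]; omega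

/-! ### Packing of deletion spheres -/

theorem disjoint_tdel_spheres {ℓ n : ℕ} (hℓ : 1 ≤ ℓ) {C : Set (List α)}
    (hC : ∀ c ∈ C, c.length = n) (hcorr : Correcting (TDup ℓ) 1 C) {a b y : List α}
    (ha : a ∈ C) (hb : b ∈ C) (hya : y ∈ sphere (TDel ℓ) 1 a)
    (hyb : y ∈ sphere (TDel ℓ) 1 b) : a = b := by
  rw [mem_sphere_one] at hya hyb
  have hla := hC a ha
  have hlb := hC b hb
  rcases hya with rfl | h1 <;> rcases hyb with h | h2
  · exact h
  · have := length_of_tdel h2; omega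
  · subst h; have := length_of_tdel h1; omega
  · obtain ⟨t, hat, hbt⟩ := tdup_diamond (tdel_iff_tdup.1 h1) (tdel_iff_tdup.1 h2)
    exact hcorr a ha b hb ⟨t, mem_sphere_one.2 (Or.inr hat), mem_sphere_one.2 (Or.inr hbt)⟩

/-- The weights `1 / |S(y)|`, summed over one deletion sphere, give at least `1`. -/
theorem one_le_sum_sphere {ℓ : ℕ} (hℓ : 1 ≤ ℓ) (c : List α) :
    (1 : ℚ) ≤ ∑ y ∈ (sphere_tdel_finite ℓ c).toFinset,
      1 / ((sphere (TDel ℓ) 1 y).ncard : ℚ) := by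
  have hpos : ∀ y : List α, (0 : ℚ) < ((sphere (TDel ℓ) 1 y).ncard : ℚ) := by
    intro y
    rw [sphere_tdel_ncard hℓ]
    positivity
  calc (1 : ℚ) = ∑ y ∈ (sphere_tdel_finite ℓ c).toFinset,
        1 / ((sphere (TDel ℓ) 1 c).ncard : ℚ) := by
        rw [Finset.sum_const, nsmul_eq_mul,
          ← Set.ncard_eq_toFinset_card _ (sphere_tdel_finite ℓ c)]
        exact (mul_one_div_cancel (hpos c).ne').symm
    _ ≤ _ := by
        apply Finset.sum_le_sum
        intro y hy
        apply one_div_le_one_div_of_le (hpos y)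
        exact_mod_cast sphere_tdel_ncard_mono hℓ ((Set.Finite.mem_toFinset _).1 hy)

theorem sum_words [Fintype α] [DecidableEq α] (m : ℕ) (f : List α → ℚ) :
    ∑ x : Fin m → α, f (List.ofFn x) =
      ∑ y ∈ Finset.univ.image (fun x : Fin m → α => List.ofFn x), f y := by
  rw [Finset.sum_image]
  intro a _ b _ h
  exact List.ofFn_injective h

theorem mem_words [Fintype α] [DecidableEq α] {m : ℕ} {y : List α} :
    y ∈ Finset.univ.image (fun x : Fin m → α => List.ofFn x) ↔ y.length = m := by
  rw [Finset.mem_image]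
  constructor
  · rintro ⟨x, _, rfl⟩
    exact List.length_ofFn
  · rintro rfl
    exact ⟨fun i => y[i], Finset.mem_univ _, by simp⟩

/-- Generalized sphere packing bound for single tandem-duplication correcting codes:
`|C| ≤ Σ_{x ∈ Z_q^n} 1/|S_{τ^δ,ℓ}(x)| + Σ_{x' ∈ Z_q^{n−ℓ}} 1/|S_{τ^δ,ℓ}(x')|`. -/
theorem stmt13 (q ℓ n : ℕ) (hq : 2 ≤ q) (hℓ : 1 ≤ ℓ) (hn : 2 * ℓ ≤ n)
    (C : Finset (List (ZMod q))) (hC : ∀ c ∈ C, c.length = n)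
    (hcorr : Correcting (TDup ℓ) 1 (↑C : Set (List (ZMod q)))) :
    haveI : NeZero q := ⟨by omega⟩
    (C.card : ℚ) ≤
      (∑ x : Fin n → ZMod q, 1 / ((sphere (TDel ℓ) 1 (List.ofFn x)).ncard : ℚ)) +
        ∑ x : Fin (n - ℓ) → ZMod q, 1 / ((sphere (TDel ℓ) 1 (List.ofFn x)).ncard : ℚ) := by
  have : NeZero q := ⟨by omega⟩
  rw [sum_words n (fun y => 1 / ((sphere (TDel ℓ) 1 y).ncard : ℚ)),
    sum_words (n - ℓ) (fun y => 1 / ((sphere (TDel ℓ) 1 y).ncard : ℚ)),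
    ← Finset.sum_union (Finset.disjoint_left.2 fun y h1 h2 => by
      rw [mem_words] at h1 h2; omega)]
  calc (C.card : ℚ) = ∑ c ∈ C, (1 : ℚ) := by simp
    _ ≤ ∑ c ∈ C, ∑ y ∈ (sphere_tdel_finite ℓ c).toFinset,
          1 / ((sphere (TDel ℓ) 1 y).ncard : ℚ) :=
        Finset.sum_le_sum fun c _ => one_le_sum_sphere hℓ c
    _ = ∑ y ∈ C.biUnion (fun c => (sphere_tdel_finite ℓ c).toFinset),
          1 / ((sphere (TDel ℓ) 1 y).ncard : ℚ) := by
        rw [Finset.sum_biUnion]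
        intro a ha b hb hab
        refine Finset.disjoint_left.2 fun y h1 h2 => hab ?_
        exact disjoint_tdel_spheres hℓ hC hcorr ha hb
          ((Set.Finite.mem_toFinset _).1 h1) ((Set.Finite.mem_toFinset _).1 h2)
    _ ≤ _ := by
        apply Finset.sum_le_sum_of_subset_of_nonneg
        · intro y hy
          obtain ⟨c, hc, hyc⟩ := Finset.mem_biUnion.1 hy
          have hlc := hC c hc
          rw [Set.Finite.mem_toFinset, mem_sphere_one] at hyc
          rw [Finset.mem_union, mem_words, mem_words]
          rcases hyc with rfl | h
          · exact Or.inl hlc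
          · have := length_of_tdel h
            right; omega
        · intro y _ _
          positivity
end DupPaper
end

section
/- For all integers q ≥ 2, ℓ ≥ 1, n ≥ ℓ and i ≥ 1, the number N_{τ^δ}(n,ℓ,i) = |{x ∈ Z_q^n : |S_{τ^δ,ℓ}(x)| = i+1}| of words of length n whose single tandem deletion sphere has size i+1 equals Σ_{ν=i}^{⌊n/ℓ⌋−1} Σ_{ω=i−1}^{n−(ν+1)ℓ} q^ℓ · A(n−(ν+1)ℓ, ℓ−1, ω) · C(ω+1, i) · C(ν−1, i−1), where A(n', ℓ', ω) is the number of words in Z_q^{n'} whose runs of zeros all have length at most ℓ' and whose Hamming weight is ω, and C(·,·) denotes the binomial coefficient (with C(a,b) = 0 when a < b). -/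
/-! The word `x` is encoded by its first `ℓ` letters and its `ℓ`-step derivative `v` of length
`n - ℓ`. A tandem deletion of length `ℓ` keeps the prefix and removes `ℓ` consecutive zeros from
`v` (`tdel_deriv`, `tdel_of_zeroDel`). Removing zeros from the same zero run always gives the same
word and different runs give different words, so the sphere has size one plus the number of zero
runs of `v` of length at least `ℓ` (`zeroDel_ncard`, `sphere_ncard`). Every `v` comes from `q ^ ℓ`
words `x` (`ncard_deriv`).

Words `v` of weight `ω` are `0^{m_0} w_1 0^{m_1} ⋯ w_ω 0^{m_ω}` with nonzero letters `w_j`. Weighting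
a run of length `k` by `f k` and writing `F = ∑ f k X^k`, their generating function is
`F * ((q - 1) X F) ^ ω` (`sum_runW`). With `f` the indicator of `k < ℓ`, so that `F` is
`R = 1 + ⋯ + X^(ℓ-1)`, this is the generating function of `Acount` (`Acount_eq`). With `f k = Y` for
`k ≥ ℓ` and `1` otherwise, `F = R * (1 + Y U)` where `U = X^ℓ / (1 - X^ℓ)` (`mark_eq`), so the
series of the weight `ω` words is the series of `Acount` times `(1 + Y U)^(ω + 1)`. The coefficient
of `Y^i X^(ν ℓ)` in the last factor is `C(ω + 1, i) C(ν - 1, i - 1)` (`blockS_pow`), which gives the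
formula (`count_longRuns`). -/

namespace DupPaper

variable {α : Type*}

/-! ### Zero runs -/

lemma zeroRunLengths_ne_nil {q : ℕ} (v : List (ZMod q)) : zeroRunLengths v ≠ [] := by
  cases v with
  | nil => simp [zeroRunLengths]
  | cons a v =>
    simp only [zeroRunLengths]
    split_ifs
    · split <;> simp
    · simp

lemma zeroRunLengths_zero_cons {q : ℕ} {v : List (ZMod q)} {h : ℕ} {t : List ℕ}
    (hv : zeroRunLengths v = h :: t) : zeroRunLengths (0 :: v) = (h + 1) :: t := by
  simp [zeroRunLengths, hv]

lemma zeroRunLengths_cons_of_ne {q : ℕ} {a : ZMod q} (ha : a ≠ 0) (v : List (ZMod q)) :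
    zeroRunLengths (a :: v) = 0 :: zeroRunLengths v := by
  simp [zeroRunLengths, ha]

/-- The head of `zeroRunLengths v` is the length of the longest all-zero prefix of `v`. -/
lemma replicate_prefix_iff {q : ℕ} (v : List (ZMod q)) : ∀ (h : ℕ) (t : List ℕ) (j : ℕ),
    zeroRunLengths v = h :: t → (List.replicate j 0 <+: v ↔ j ≤ h) := by
  induction v with
  | nil =>
    intro h t j hv
    simp only [zeroRunLengths, List.cons.injEq] at hv
    obtain ⟨rfl, -⟩ := hv
    simp
  | cons a v ih =>
    intro h t j hv
    obtain ⟨h', t', hv'⟩ := List.exists_cons_of_ne_nil (zeroRunLengths_ne_nil v)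
    cases j with
    | zero => simp
    | succ j =>
      by_cases ha : a = 0
      · subst ha
        rw [zeroRunLengths_zero_cons hv'] at hv
        simp only [List.cons.injEq] at hv
        have := ih h' t' j hv'
        rw [List.replicate_succ, List.cons_prefix_cons]
        simp only [true_and, this]
        omega
      · rw [zeroRunLengths_cons_of_ne ha] at hv
        simp only [List.cons.injEq] at hv
        rw [List.replicate_succ, List.cons_prefix_cons]
        have : (0 : ZMod q) ≠ a := fun h => ha h.symm
        simp only [this, false_and, false_iff]
        omega

/-- The number of maximal zero runs of `v` of length at least `ℓ`. -/
def longRuns {q : ℕ} (ℓ : ℕ) (v : List (ZMod q)) : ℕ :=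
  (zeroRunLengths v).countP (fun k => decide (ℓ ≤ k))

/-- The words obtained from `v` by removing a block of `ℓ` consecutive zeros. -/
def zeroDel {q : ℕ} (ℓ : ℕ) (v : List (ZMod q)) : Set (List (ZMod q)) :=
  {y | ∃ a b, v = a ++ List.replicate ℓ 0 ++ b ∧ y = a ++ b}

/-- The removed block either starts at the first letter or lies in the tail. -/
lemma zeroDel_cons {q ℓ : ℕ} (c : ZMod q) (v : List (ZMod q)) :
    zeroDel ℓ (c :: v) =
      {y | c :: v = List.replicate ℓ 0 ++ y} ∪ (List.cons c) '' zeroDel ℓ v := by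
  ext y
  constructor
  · rintro ⟨a, b, h1, rfl⟩
    cases a with
    | nil => left; simpa using h1
    | cons d a =>
      right
      simp only [List.cons_append, List.cons.injEq] at h1
      obtain ⟨rfl, h1⟩ := h1
      exact ⟨a ++ b, ⟨a, b, h1, rfl⟩, rfl⟩
  · rintro (h | ⟨y, ⟨a, b, h1, rfl⟩, rfl⟩)
    · exact ⟨[], y, by simpa using h, rfl⟩
    · exact ⟨c :: a, b, by simp [h1], rfl⟩

/-- Deleting `ℓ` zeros inside one zero run gives the same word for every position in that run,
and different runs give different words, so the number of results is the number of long runs. -/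
lemma zeroDel_ncard {q ℓ : ℕ} (hℓ : 1 ≤ ℓ) (v : List (ZMod q)) :
    (zeroDel ℓ v).Finite ∧ (zeroDel ℓ v).ncard = longRuns ℓ v := by
  induction v with
  | nil =>
    have : zeroDel ℓ ([] : List (ZMod q)) = ∅ := by
      ext y
      simp [zeroDel]
      intros
      omega
    rw [this]
    simp [longRuns, zeroRunLengths]
    omega
  | cons c v ih =>
    obtain ⟨fin, ih⟩ := ih
    have hinj : Function.Injective (List.cons c) := List.cons_injective
    have himg := Set.ncard_image_of_injective (zeroDel ℓ v) hinj
    have fimg := fin.image (List.cons c)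
    obtain ⟨h, t, hv⟩ := List.exists_cons_of_ne_nil (zeroRunLengths_ne_nil v)
    obtain ⟨k, rfl⟩ : ∃ k, ℓ = k + 1 := ⟨ℓ - 1, by omega⟩
    rw [zeroDel_cons]
    by_cases hc : c = 0
    · subst hc
      have hset : {y | (0 : ZMod q) :: v = List.replicate (k + 1) 0 ++ y} =
          {y | v = List.replicate k 0 ++ y} := by
        ext y
        simp [List.replicate_succ]
      rw [hset]
      have pre := replicate_prefix_iff v h t
      have hlong : longRuns (k + 1) ((0 : ZMod q) :: v) =
          t.countP (fun j => decide (k + 1 ≤ j)) + if k ≤ h then 1 else 0 := by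
        simp [longRuns, zeroRunLengths_zero_cons hv, List.countP_cons]
      have hlong' : longRuns (k + 1) v =
          t.countP (fun j => decide (k + 1 ≤ j)) + if k + 1 ≤ h then 1 else 0 := by
        simp [longRuns, hv, List.countP_cons]
      by_cases hk : k ≤ h
      · obtain ⟨y, hy⟩ := (pre k hv).2 hk
        have hs : {y | v = List.replicate k 0 ++ y} = {y} := by
          ext z
          simp [← hy, eq_comm]
        rw [hs, Set.singleton_union]
        refine ⟨fimg.insert _, ?_⟩
        by_cases hk' : k + 1 ≤ h
        -- The run continues past the block, so deleting one position later gives the same word.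
        · have hmem : y ∈ (List.cons 0) '' zeroDel (k + 1) v := by
            obtain ⟨z, hz⟩ := (pre (k + 1) hv).2 hk'
            have : y = 0 :: z := by
              rw [List.replicate_succ', ← hy] at hz
              simpa using hz.symm
            exact ⟨z, ⟨[], z, by simpa using hz.symm, by simp⟩, this.symm⟩
          rw [Set.insert_eq_of_mem hmem, himg, ih, hlong, hlong']
          simp [hk, hk']
        -- Here the whole run is deleted, so the result does not start with zero.
        · have hmem : y ∉ (List.cons 0) '' zeroDel (k + 1) v := by
            rintro ⟨z, -, rfl⟩
            apply hk'
            rw [← pre (k + 1) hv, ← hy, List.replicate_succ']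
            exact ⟨z, by simp⟩
          rw [Set.ncard_insert_of_notMem hmem fimg, himg, ih, hlong, hlong']
          simp [hk, hk']
      · have hs : {y | v = List.replicate k 0 ++ y} = ∅ := by
          ext z
          simp only [Set.mem_ofPred_eq, Set.mem_empty_iff_false, iff_false]
          intro hz
          exact hk ((pre k hv).1 ⟨z, hz.symm⟩)
        rw [hs, Set.empty_union]
        refine ⟨fimg, ?_⟩
        have : ¬ k + 1 ≤ h := by omega
        rw [himg, ih, hlong, hlong']
        simp [hk, this]
    · have hs : {y | c :: v = List.replicate (k + 1) 0 ++ y} = ∅ := by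
        ext z
        simp [List.replicate_succ, hc]
      rw [hs, Set.empty_union]
      refine ⟨fimg, ?_⟩
      rw [himg, ih]
      simp [longRuns, zeroRunLengths_cons_of_ne hc]

/-! ### Tandem deletions through the derivative -/

/-- The derivative splits at a block `v` of length `ℓ`, which belongs to both parts. -/
lemma derivV_append {q ℓ : ℕ} (u v w : List (ZMod q)) (hv : v.length = ℓ) :
    derivV q ℓ (u ++ v ++ w) = derivV q ℓ (u ++ v) ++ derivV q ℓ (v ++ w) := by
  have h1 : (u ++ v ++ w).drop ℓ = (u ++ v).drop ℓ ++ w := by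
    rw [List.drop_append_of_le_length]
    simp [hv]
  have h2 : (v ++ w).drop ℓ = w := by
    rw [← hv]; simp
  have hlen : ((u ++ v).drop ℓ).length = u.length := by simp [hv]
  have h3 : List.zipWith (· - ·) ((u ++ v).drop ℓ) (u ++ v) =
      List.zipWith (· - ·) ((u ++ v).drop ℓ) u := by
    have := List.zipWith_append (f := fun a b : ZMod q => a - b) (l₁ := (u ++ v).drop ℓ)
      (l₁' := []) (l₂ := u) (l₂' := v) hlen
    simpa using this
  unfold derivV
  rw [h1, h2, h3, List.append_assoc, List.zipWith_append hlen]

lemma zipWith_sub_self {q : ℕ} (v : List (ZMod q)) :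
    List.zipWith (· - ·) v v = List.replicate v.length (0 : ZMod q) := by
  induction v with
  | nil => rfl
  | cons a v ih => simp [List.replicate_succ]

lemma eq_of_zipWith_sub {q : ℕ} : ∀ (v w : List (ZMod q)), v.length = w.length →
    List.zipWith (· - ·) v w = List.replicate w.length (0 : ZMod q) → v = w
  | [], [], _, _ => rfl
  | a :: v, b :: w, hl, h => by
    simp only [List.zipWith_cons_cons, List.length_cons, List.replicate_succ,
      List.cons.injEq] at h
    rw [sub_eq_zero.1 h.1, eq_of_zipWith_sub v w (by simpa using hl) h.2]
  | [], _ :: _, hl, _ => by simp at hl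
  | _ :: _, [], hl, _ => by simp at hl

lemma derivV_block {q ℓ : ℕ} (v w : List (ZMod q)) (hv : v.length = ℓ) (hw : w.length = ℓ) :
    derivV q ℓ (v ++ w) = List.zipWith (· - ·) w v := by
  have h2 : (v ++ w).drop ℓ = w := by
    rw [← hv]; simp
  have := List.zipWith_append (f := fun a b : ZMod q => a - b) (l₁ := w) (l₁' := [])
    (l₂ := v) (l₂' := w) (by omega)
  unfold derivV
  rw [h2]
  simpa using this

lemma derivV_length {q ℓ : ℕ} (x : List (ZMod q)) : (derivV q ℓ x).length = x.length - ℓ := by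
  simp [derivV]

/-- A word is determined by its first `ℓ` letters and its derivative. -/
lemma derivV_inj {q ℓ : ℕ} (hℓ : 1 ≤ ℓ) : ∀ (y z p : List (ZMod q)), p.length = ℓ →
    derivV q ℓ (p ++ y) = derivV q ℓ (p ++ z) → y = z := by
  intro y
  have hdrop : ∀ (p w : List (ZMod q)), p.length = ℓ → (p ++ w).drop ℓ = w := by
    rintro p w rfl; simp
  induction y with
  | nil =>
    intro z p hp h
    have := congrArg List.length h
    simp only [derivV_length, List.length_append, List.length_nil] at this
    exact (List.length_eq_zero_iff.1 (by omega)).symm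
  | cons c y ih =>
    intro z p hp h
    cases z with
    | nil =>
      have := congrArg List.length h
      simp only [derivV_length, List.length_append, List.length_nil, List.length_cons] at this
      omega
    | cons d z =>
      obtain ⟨a, p, rfl⟩ := List.exists_cons_of_length_pos (l := p) (by omega)
      simp only [derivV, hdrop _ _ hp] at h
      simp only [List.cons_append, List.zipWith_cons_cons, List.cons.injEq, sub_left_inj] at h
      obtain ⟨rfl, h⟩ := h
      have hp' : (p ++ [c]).length = ℓ := by simpa using hp
      rw [ih z (p ++ [c]) hp']
      simp only [derivV, hdrop _ _ hp']
      simpa using h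

/-- A tandem deletion removes `ℓ` consecutive zeros from the derivative and keeps the first
`ℓ` letters. -/
lemma tdel_deriv {q ℓ : ℕ} {x y : List (ZMod q)} (h : TDel ℓ x y) :
    derivV q ℓ y ∈ zeroDel ℓ (derivV q ℓ x) ∧ y.take ℓ = x.take ℓ ∧ ℓ ≤ y.length := by
  obtain ⟨u, v, w, hv, rfl, rfl⟩ := h
  refine ⟨⟨derivV q ℓ (u ++ v), derivV q ℓ (v ++ w), ?_, derivV_append _ _ _ hv⟩, ?_, ?_⟩
  · have e1 : derivV q ℓ (v ++ v) = List.replicate ℓ 0 := by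
      rw [derivV_block v v hv hv, zipWith_sub_self, hv]
    have h1 := derivV_append u v (v ++ w) hv
    have h2 := derivV_append v v w hv
    simp only [List.append_assoc] at h1 h2 ⊢
    rw [h1, h2, e1]
  · have htake : ∀ z, (u ++ v ++ z).take ℓ = (u ++ v).take ℓ := fun z =>
      List.take_append_of_le_length (by simp [hv])
    rw [List.append_assoc (u ++ v), htake, htake]
  · simp [hv]; omega

lemma tdel_of_zeroDel {q ℓ : ℕ} (hℓ : 1 ≤ ℓ) {x z : List (ZMod q)}
    (h : z ∈ zeroDel ℓ (derivV q ℓ x)) : ∃ y, TDel ℓ x y ∧ derivV q ℓ y = z := by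
  obtain ⟨a, b, hx, rfl⟩ := h
  have hl := congrArg List.length hx
  simp only [derivV_length, List.length_append, List.length_replicate] at hl
  obtain ⟨u, x1, rfl, hu⟩ : ∃ u x1, x = u ++ x1 ∧ u.length = a.length :=
    ⟨x.take a.length, x.drop a.length, by simp, by simp; omega⟩
  simp only [List.length_append] at hl
  obtain ⟨v, x2, rfl, hv⟩ : ∃ v x2, x1 = v ++ x2 ∧ v.length = ℓ :=
    ⟨x1.take ℓ, x1.drop ℓ, by simp, by simp; omega⟩
  simp only [List.length_append] at hl
  obtain ⟨v', w, rfl, hv'⟩ : ∃ v' w, x2 = v' ++ w ∧ v'.length = ℓ :=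
    ⟨x2.take ℓ, x2.drop ℓ, by simp, by simp; omega⟩
  have h1 := derivV_append u v (v' ++ w) hv
  have h2 := derivV_append v v' w hv'
  rw [derivV_block v v' hv hv'] at h2
  simp only [List.append_assoc] at h1 h2 hx
  rw [h1, h2] at hx
  obtain ⟨e1, e2⟩ := List.append_inj hx (by simp [derivV_length, hu, hv])
  obtain ⟨e3, e4⟩ := List.append_inj e2 (by simp [hv, hv'])
  have : v' = v := eq_of_zipWith_sub v' v (by omega) (by rw [e3, hv])
  subst this
  refine ⟨u ++ v' ++ w, ⟨u, v', w, hv, by simp, rfl⟩, ?_⟩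
  rw [derivV_append _ _ _ hv, e1, e4]

lemma sphere_ncard {q ℓ : ℕ} (hℓ : 1 ≤ ℓ) (x : List (ZMod q)) :
    (sphere (TDel ℓ) 1 x).ncard = longRuns ℓ (derivV q ℓ x) + 1 := by
  have hs : sphere (TDel ℓ) 1 x = insert x {y | TDel ℓ x y} := by
    ext y
    constructor
    · rintro ⟨k, hk, h⟩
      interval_cases k
      · left; exact h.symm
      · obtain ⟨z, hz, rfl⟩ := h
        right; exact hz
    · rintro (rfl | h)
      · exact ⟨0, by omega, rfl⟩
      · exact ⟨1, le_refl _, y, h, rfl⟩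
  have himg : derivV q ℓ '' {y | TDel ℓ x y} = zeroDel ℓ (derivV q ℓ x) := by
    ext z
    constructor
    · rintro ⟨y, hy, rfl⟩
      exact (tdel_deriv hy).1
    · intro hz
      exact tdel_of_zeroDel hℓ hz
  have hinj : Set.InjOn (derivV q ℓ) {y | TDel ℓ x y} := by
    intro y hy z hz h
    obtain ⟨-, hy1, hy2⟩ := tdel_deriv hy
    obtain ⟨-, hz1, hz2⟩ := tdel_deriv hz
    rw [← List.take_append_drop ℓ y, ← List.take_append_drop ℓ z, hy1, ← hz1] at h ⊢
    rw [derivV_inj hℓ _ _ _ (by simpa using hz2) h]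
  obtain ⟨hfin, hcard⟩ := zeroDel_ncard hℓ (derivV q ℓ x)
  have hf : {y | TDel ℓ x y}.Finite := Set.Finite.of_finite_image (himg ▸ hfin) hinj
  have hx : x ∉ {y | TDel ℓ x y} := by
    rintro ⟨u, v, w, hv, h1, h2⟩
    have := congrArg List.length (h1.symm.trans h2)
    simp only [List.length_append] at this
    omega
  rw [hs, Set.ncard_insert_of_notMem hx hf, ← hinj.ncard_image, himg, hcard]

/-- The derivative on words of fixed length is `q ^ ℓ`-to-one. -/
lemma ncard_deriv {q ℓ m : ℕ} (hq : 2 ≤ q) (hℓ : 1 ≤ ℓ) (P : List (ZMod q) → Prop) :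
    {x : Fin (ℓ + m) → ZMod q | P (derivV q ℓ (List.ofFn x))}.ncard =
      q ^ ℓ * {v : Fin m → ZMod q | P (List.ofFn v)}.ncard := by
  have : NeZero q := ⟨by omega⟩
  let E : (Fin (ℓ + m) → ZMod q) → (Fin ℓ → ZMod q) × (Fin m → ZMod q) := fun x =>
    (fun j => x (Fin.castAdd m j), fun j => x (Fin.natAdd ℓ j) - x ⟨j, by omega⟩)
  have hE : ∀ x, List.ofFn (E x).2 = derivV q ℓ (List.ofFn x) := by
    intro x
    apply List.ext_getElem
    · simp [derivV_length]
    · intro j h1 h2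
      simp [derivV, E, Fin.natAdd]
  have hx : ∀ x : Fin (ℓ + m) → ZMod q, List.ofFn x =
      List.ofFn (E x).1 ++ List.ofFn (fun j => x (Fin.natAdd ℓ j)) := by
    intro x
    exact List.ofFn_add
  have hinj : Function.Injective E := by
    intro x y h
    apply List.ofFn_injective
    have h2 : derivV q ℓ (List.ofFn x) = derivV q ℓ (List.ofFn y) := by
      rw [← hE, ← hE, h]
    rw [hx x, hx y, h] at h2 ⊢
    rw [derivV_inj hℓ _ _ _ (by simp) h2]
  have hbij : Function.Bijective E := by
    rw [Fintype.bijective_iff_injective_and_card]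
    refine ⟨hinj, ?_⟩
    simp [pow_add]
  have himg : E '' {x | P (derivV q ℓ (List.ofFn x))} =
      (Set.univ : Set (Fin ℓ → ZMod q)) ×ˢ {v : Fin m → ZMod q | P (List.ofFn v)} := by
    ext ⟨u, v⟩
    constructor
    · rintro ⟨x, hx, h⟩
      refine ⟨trivial, ?_⟩
      have := hE x
      rw [h] at this
      simp only [Set.mem_ofPred_eq] at hx ⊢
      rwa [this]
    · rintro ⟨-, hv⟩
      obtain ⟨x, hx⟩ := hbij.2 (u, v)
      refine ⟨x, ?_, hx⟩
      have := hE x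
      rw [hx] at this
      simp only [Set.mem_ofPred_eq] at hv ⊢
      rwa [← this]
  rw [← Set.ncard_image_of_injective _ hinj, himg, Set.ncard_prod, Set.ncard_univ]
  simp [Nat.card_eq_fintype_card]

/-! ### Generating functions of words by zero runs -/

/-- The product of `f m_j` over the lengths `m_j` of the zero runs of `0^a v`. -/
def runW {q : ℕ} {K : Type*} [CommRing K] (f : ℕ → K) : ℕ → List (ZMod q) → K
  | a, [] => f a
  | a, c :: v => if c = 0 then runW f (a + 1) v else f a * runW f 0 v

lemma runW_eq {q : ℕ} {K : Type*} [CommRing K] (f : ℕ → K) (v : List (ZMod q)) :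
    ∀ (a h : ℕ) (t : List ℕ), zeroRunLengths v = h :: t →
      runW f a v = f (a + h) * (t.map f).prod := by
  induction v with
  | nil =>
    intro a h t hv
    simp only [zeroRunLengths, List.cons.injEq] at hv
    obtain ⟨rfl, rfl⟩ := hv
    simp [runW]
  | cons c v ih =>
    intro a h t hv
    obtain ⟨h', t', hv'⟩ := List.exists_cons_of_ne_nil (zeroRunLengths_ne_nil v)
    by_cases hc : c = 0
    · subst hc
      rw [zeroRunLengths_zero_cons hv'] at hv
      simp only [List.cons.injEq] at hv
      obtain ⟨rfl, rfl⟩ := hv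
      simp only [runW, if_true]
      rw [ih _ _ _ hv']
      congr 2
      omega
    · rw [zeroRunLengths_cons_of_ne hc] at hv
      simp only [List.cons.injEq] at hv
      obtain ⟨rfl, rfl⟩ := hv
      simp only [runW, hc, if_false]
      rw [ih _ _ _ hv', hv']
      simp

lemma runW_zero {q : ℕ} {K : Type*} [CommRing K] (f : ℕ → K) (v : List (ZMod q)) :
    runW f 0 v = ((zeroRunLengths v).map f).prod := by
  obtain ⟨h, t, hv⟩ := List.exists_cons_of_ne_nil (zeroRunLengths_ne_nil v)
  rw [runW_eq f v 0 h t hv, hv]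
  simp

lemma wtH_zero_cons {q : ℕ} (v : List (ZMod q)) : wtH (0 :: v) = wtH v := by
  simp [wtH]

lemma wtH_cons_of_ne {q : ℕ} {c : ZMod q} (hc : c ≠ 0) (v : List (ZMod q)) :
    wtH (c :: v) = wtH v + 1 := by
  simp [wtH, hc]

open PowerSeries in
/-- Words of weight `ω` are `0^{m_0} w_1 0^{m_1} ⋯ w_ω 0^{m_ω}`, so their generating function is
a product of `ω + 1` run factors and `ω` factors `(q - 1) X`. The parameter `a` counts zeros
already read in front of the word. -/
lemma sum_runW {q : ℕ} [NeZero q] {K : Type*} [CommRing K] (f : ℕ → K) (m : ℕ) :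
    ∀ (ω a : ℕ), (∑ v : Fin m → ZMod q,
        if wtH (List.ofFn v) = ω then runW f a (List.ofFn v) else 0) =
      coeff m (PowerSeries.mk (fun k => f (a + k)) *
        (C ((q : K) - 1) * X * PowerSeries.mk f) ^ ω) := by
  induction m with
  | zero =>
    intro ω a
    cases ω with
    | zero => simp [wtH, runW]
    | succ ω => simp [wtH]
  | succ m ih =>
    intro ω a
    have hF : PowerSeries.mk (fun k => f (a + k)) =
        C (f a) + X * PowerSeries.mk (fun k => f (a + 1 + k)) := by
      ext k
      cases k with
      | zero => simp
      | succ k =>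
        simp only [coeff_mk, map_add, coeff_succ_X_mul, coeff_C, Nat.succ_ne_zero, if_false,
          zero_add]
        congr 1
        omega
    rw [← Equiv.sum_comp (Fin.consEquiv (fun _ => ZMod q)), Fintype.sum_prod_type]
    simp only [Fin.consEquiv, Equiv.coe_fn_mk, List.ofFn_cons]
    rw [← Finset.add_sum_erase _ _ (Finset.mem_univ (0 : ZMod q))]
    have hz : (∑ v : Fin m → ZMod q, if wtH ((0 : ZMod q) :: List.ofFn v) = ω then
        runW f a ((0 : ZMod q) :: List.ofFn v) else 0) =
        coeff m (PowerSeries.mk (fun k => f (a + 1 + k)) *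
          (C ((q : K) - 1) * X * PowerSeries.mk f) ^ ω) := by
      rw [← ih]
      simp [wtH_zero_cons, runW]
    rw [hz, hF, add_mul, map_add, add_comm, mul_assoc X, coeff_succ_X_mul]
    congr 1
    cases ω with
    | zero =>
      rw [pow_zero, mul_one, coeff_C, if_neg (Nat.succ_ne_zero m)]
      apply Finset.sum_eq_zero
      intro c hc
      apply Finset.sum_eq_zero
      intro v _
      rw [wtH_cons_of_ne (Finset.ne_of_mem_erase hc)]
      simp
    | succ ω =>
      have hne : ∀ c ∈ Finset.univ.erase (0 : ZMod q),
          (∑ v : Fin m → ZMod q, if wtH (c :: List.ofFn v) = ω + 1 then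
            runW f a (c :: List.ofFn v) else 0) =
          f a * coeff m (PowerSeries.mk f *
            (C ((q : K) - 1) * X * PowerSeries.mk f) ^ ω) := by
        intro c hc
        have hc' := Finset.ne_of_mem_erase hc
        have := ih ω 0
        simp only [zero_add] at this
        rw [← this, Finset.mul_sum]
        apply Finset.sum_congr rfl
        intro v _
        simp [wtH_cons_of_ne hc', runW, hc']
      have hcard : ((Finset.univ.erase (0 : ZMod q)).card : K) = (q : K) - 1 := by
        rw [Finset.card_erase_of_mem (Finset.mem_univ _), Finset.card_univ, ZMod.card,
          Nat.cast_sub (Nat.one_le_iff_ne_zero.2 (NeZero.ne q))]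
        simp
      rw [Finset.sum_congr rfl hne, Finset.sum_const, nsmul_eq_mul, hcard]
      have : C (f a) * (C ((q : K) - 1) * X * PowerSeries.mk f) ^ (ω + 1) =
          X * (C (f a * ((q : K) - 1)) *
            (PowerSeries.mk f * (C ((q : K) - 1) * X * PowerSeries.mk f) ^ ω)) := by
        rw [map_mul]; ring
      rw [this, coeff_succ_X_mul, coeff_C_mul]
      ring

/-- Strengthening of `runs_le_iff` suited to induction on `v`: the first entry `h` of
`zeroRunLengths v` is the length of the first run if that is a zero run and `0` otherwise, and the
bounds on the remaining zero runs agree in the two descriptions. -/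
lemma runs_zeroRunLengths {q : ℕ} (L : ℕ) (v : List (ZMod q)) :
    ∃ h t, zeroRunLengths v = h :: t ∧
      ((runs v = [] ∧ h = 0 ∧ t = []) ∨ ∃ r rs, runs v = r :: rs ∧
        (∃ c r', r = c :: r' ∧ ((c = 0 ∧ h = r.length ∧
            ((∀ k ∈ t, k ≤ L) ↔ ∀ s ∈ rs, s.head? = some (0 : ZMod q) → s.length ≤ L)) ∨
          (c ≠ 0 ∧ h = 0 ∧
            ((∀ k ∈ t, k ≤ L) ↔ ∀ s ∈ rs, s.head? = some (0 : ZMod q) → s.length ≤ L))))) := by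
  induction v with
  | nil => exact ⟨0, [], rfl, Or.inl ⟨rfl, rfl, rfl⟩⟩
  | cons a v ih =>
    obtain ⟨h, t, hv, ih⟩ := ih
    by_cases ha : a = 0
    · subst ha
      refine ⟨h + 1, t, zeroRunLengths_zero_cons hv, Or.inr ?_⟩
      rcases ih with ⟨h1, rfl, rfl⟩ | ⟨r, rs, h1, c, r', rfl, ⟨rfl, h2, h3⟩ | ⟨hc, h2, h3⟩⟩
      · exact ⟨[0], [], by simp [runs, h1], 0, [], rfl, Or.inl (by simp)⟩
      · exact ⟨0 :: 0 :: r', rs, by simp [runs, h1], 0, 0 :: r', rfl,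
          Or.inl ⟨rfl, by simp [h2], h3⟩⟩
      · refine ⟨[0], (c :: r') :: rs, by simp [runs, h1, hc], 0, [], rfl,
          Or.inl ⟨rfl, by simp [h2], ?_⟩⟩
        simp [h3, hc]
    · refine ⟨0, h :: t, by rw [zeroRunLengths_cons_of_ne ha, hv], Or.inr ?_⟩
      rcases ih with ⟨h1, rfl, rfl⟩ | ⟨r, rs, h1, c, r', rfl, ⟨rfl, h2, h3⟩ | ⟨hc, h2, h3⟩⟩
      · exact ⟨[a], [], by simp [runs, h1], a, [], rfl, Or.inr (by simp [ha])⟩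
      · refine ⟨[a], (0 :: r') :: rs, by simp [runs, h1, Ne.symm ha], a, [], rfl,
          Or.inr ⟨ha, rfl, ?_⟩⟩
        simp [h3, h2]
      · by_cases hca : c = a
        · subst hca
          exact ⟨c :: c :: r', rs, by simp [runs, h1], c, c :: r', rfl,
            Or.inr ⟨ha, rfl, by simp [h3, h2]⟩⟩
        · refine ⟨[a], (c :: r') :: rs, by simp [runs, h1, hca], a, [], rfl,
            Or.inr ⟨ha, rfl, ?_⟩⟩
          simp [h3, hc, h2]

/-- The admissible words for `Acount` are those all of whose zero run lengths are at most `L`. -/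
lemma runs_le_iff {q : ℕ} (L : ℕ) (v : List (ZMod q)) :
    (∀ r ∈ runs v, r.head? = some (0 : ZMod q) → r.length ≤ L) ↔
      ∀ k ∈ zeroRunLengths v, k ≤ L := by
  obtain ⟨h, t, hv, ⟨h1, rfl, rfl⟩ | ⟨r, rs, h1, c, r', rfl, ⟨rfl, h2, h3⟩ | ⟨hc, h2, h3⟩⟩⟩ :=
    runs_zeroRunLengths L v
  · simp [h1, hv]
  · simp [h1, hv, h2, h3]
  · simp [h1, hv, h2, h3, hc]

lemma prod_indicator {K : Type*} [CommRing K] (ℓ : ℕ) (t : List ℕ) :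
    (t.map (fun k => if k < ℓ then (1 : K) else 0)).prod = if ∀ k ∈ t, k < ℓ then 1 else 0 := by
  induction t with
  | nil => simp
  | cons a t ih =>
    rw [List.map_cons, List.prod_cons, ih]
    by_cases h : a < ℓ <;> simp [h]

lemma prod_mark {K : Type*} [CommRing K] (y : K) (ℓ : ℕ) (t : List ℕ) :
    (t.map (fun k => if ℓ ≤ k then y else 1)).prod = y ^ t.countP (fun k => decide (ℓ ≤ k)) := by
  induction t with
  | nil => simp
  | cons a t ih =>
    rw [List.map_cons, List.prod_cons, ih, List.countP_cons]
    by_cases h : ℓ ≤ a <;> simp [h, pow_succ, mul_comm]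

section Series

open PowerSeries

/-- The series `1 + X + ⋯ + X ^ (ℓ - 1)` of the short runs. -/
noncomputable def shortS (K : Type*) [CommRing K] (ℓ : ℕ) : PowerSeries K :=
  PowerSeries.mk (fun k => if k < ℓ then 1 else 0)

/-- The series `∑_{s ≥ 1} C(s - 1, i) X ^ (ℓ s)`; for `i = 0` it is `X ^ ℓ / (1 - X ^ ℓ)`. -/
noncomputable def blockS (K : Type*) [CommRing K] (ℓ i : ℕ) : PowerSeries K :=
  PowerSeries.mk (fun k => if ℓ ∣ k ∧ 0 < k then ((Nat.choose (k / ℓ - 1) i : ℕ) : K) else 0)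

lemma Acount_eq {q ℓ : ℕ} [NeZero q] (K : Type*) [CommRing K] (hℓ : 1 ≤ ℓ) (m ω : ℕ) :
    (Acount q m (ℓ - 1) ω : K) =
      coeff m (shortS K ℓ * (C ((q : K) - 1) * X * shortS K ℓ) ^ ω) := by
  classical
  have := sum_runW (q := q) (fun k => if k < ℓ then (1 : K) else 0) m ω 0
  simp only [zero_add] at this
  rw [shortS, ← this]
  unfold Acount
  rw [Set.ncard_eq_toFinset_card', Set.toFinset_ofPred, Finset.card_filter]
  push_cast
  apply Finset.sum_congr rfl
  intro v _
  rw [runW_zero, prod_indicator]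
  simp only [runs_le_iff]
  have h : (∀ k ∈ zeroRunLengths (List.ofFn v), k ≤ ℓ - 1) ↔
      ∀ k ∈ zeroRunLengths (List.ofFn v), k < ℓ :=
    forall₂_congr fun k _ => by omega
  simp only [h]
  split_ifs <;> simp_all

lemma one_sub_ne {K : Type*} [CommRing K] [IsDomain K] {ℓ : ℕ} (hℓ : 1 ≤ ℓ) :
    (1 - X ^ ℓ : PowerSeries K) ≠ 0 := by
  intro h
  have := congrArg (coeff 0) h
  rw [map_sub, coeff_X_pow, if_neg (by omega)] at this
  simp at this

lemma dvd_sub_self_iff {ℓ k : ℕ} (h : ℓ ≤ k) : ℓ ∣ k - ℓ ↔ ℓ ∣ k := by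
  obtain ⟨j, rfl⟩ := Nat.exists_eq_add_of_le h
  simp

lemma one_sub_mul_blockS_zero {K : Type*} [CommRing K] {ℓ : ℕ} (hℓ : 1 ≤ ℓ) :
    (1 - X ^ ℓ) * blockS K ℓ 0 = X ^ ℓ := by
  ext k
  rw [sub_mul, one_mul, map_sub, coeff_X_pow_mul', coeff_X_pow]
  simp only [blockS, coeff_mk, Nat.choose_zero_right, Nat.cast_one]
  rcases lt_trichotomy k ℓ with h | rfl | h
  · have : ¬ (ℓ ∣ k ∧ 0 < k) := fun h' => absurd (Nat.le_of_dvd h'.2 h'.1) (by omega)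
    rw [if_neg this, if_neg (by omega), if_neg (by omega)]; simp
  · simp; omega
  · have : (ℓ ∣ k - ℓ ∧ 0 < k - ℓ) ↔ (ℓ ∣ k ∧ 0 < k) := by
      rw [dvd_sub_self_iff h.le]
      constructor <;> rintro ⟨a, b⟩ <;> exact ⟨a, by omega⟩
    rw [if_pos h.le, if_neg (c := k = ℓ) (by omega)]
    simp only [this, sub_self]

/-- Pascal's rule in generating function form. -/
lemma one_sub_mul_blockS_succ {K : Type*} [CommRing K] {ℓ : ℕ} (hℓ : 1 ≤ ℓ) (i : ℕ) :
    (1 - X ^ ℓ) * blockS K ℓ (i + 1) = X ^ ℓ * blockS K ℓ i := by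
  ext k
  rw [sub_mul, one_mul, map_sub, coeff_X_pow_mul', coeff_X_pow_mul']
  simp only [blockS, coeff_mk]
  by_cases hk : ℓ ∣ k
  · obtain ⟨s, rfl⟩ := hk
    rcases s with _ | _ | s
    · simp
    · simp [Nat.div_self (show 0 < ℓ by omega)]
    · have e : ℓ * (s + 1 + 1) - ℓ = ℓ * (s + 1) := by
        rw [Nat.mul_succ ℓ (s + 1)]; omega
      have p1 : 0 < ℓ * (s + 1 + 1) := by positivity
      have p2 : 0 < ℓ * (s + 1) := by positivity
      have p3 : ℓ ≤ ℓ * (s + 1 + 1) := Nat.le_mul_of_pos_right _ (by omega)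
      rw [e, if_pos p3, if_pos p3, if_pos ⟨dvd_mul_right _ _, p1⟩,
        if_pos ⟨dvd_mul_right _ _, p2⟩, if_pos ⟨dvd_mul_right _ _, p2⟩,
        Nat.mul_div_cancel_left _ (by omega), Nat.mul_div_cancel_left _ (by omega)]
      simp only [Nat.add_sub_cancel]
      rw [Nat.choose_succ_succ]
      push_cast
      ring
  · rw [if_neg (fun h => hk h.1)]
    by_cases h : ℓ ≤ k
    · have : ¬ (ℓ ∣ k - ℓ ∧ 0 < k - ℓ) := fun h' =>
        hk ((dvd_sub_self_iff h).1 h'.1)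
      rw [if_pos h, if_pos h, if_neg this, if_neg this, sub_zero]
    · simp [h]

lemma blockS_pow {K : Type*} [CommRing K] [IsDomain K] {ℓ : ℕ} (hℓ : 1 ≤ ℓ) (i : ℕ) :
    blockS K ℓ 0 ^ (i + 1) = blockS K ℓ i := by
  induction i with
  | zero => simp
  | succ i ih =>
    apply mul_left_cancel₀ (one_sub_ne (K := K) hℓ)
    rw [pow_succ', ih, ← mul_assoc, one_sub_mul_blockS_zero hℓ, one_sub_mul_blockS_succ hℓ]

/-- Division with remainder by `ℓ`, for a run length marked by `y` when it is at least `ℓ`. -/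
lemma mark_eq {K : Type*} [CommRing K] [IsDomain K] {ℓ : ℕ} (hℓ : 1 ≤ ℓ) (y : K) :
    PowerSeries.mk (fun k => if ℓ ≤ k then y else 1) =
      shortS K ℓ * (1 + C y * blockS K ℓ 0) := by
  have key : shortS K ℓ * blockS K ℓ 0 = PowerSeries.mk (fun k => if ℓ ≤ k then (1 : K) else 0) := by
    apply mul_left_cancel₀ (one_sub_ne (K := K) hℓ)
    rw [mul_left_comm, one_sub_mul_blockS_zero hℓ]
    ext k
    rw [mul_comm, sub_mul, one_mul, map_sub, coeff_X_pow_mul', coeff_X_pow_mul']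
    simp only [shortS, coeff_mk]
    by_cases h : ℓ ≤ k
    · by_cases h' : ℓ ≤ k - ℓ
      · simp [h, h', Nat.not_lt.2 h']
      · simp [h, h', Nat.lt_of_not_le h']
    · simp [h]
  rw [mul_add, mul_one, mul_left_comm, key]
  ext k
  rw [map_add, coeff_C_mul]
  simp only [shortS, coeff_mk]
  by_cases h : ℓ ≤ k
  · simp [h, Nat.not_lt.2 h]
  · simp [h, Nat.lt_of_not_le h]

/-! ### Counting words by long zero runs -/

lemma wtH_le {q : ℕ} (v : List (ZMod q)) : wtH v ≤ v.length := List.length_filter_le _ _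

lemma Acount_eq_zero {q m L ω : ℕ} (h : m < ω) : Acount q m L ω = 0 := by
  unfold Acount
  rw [← Set.ncard_empty (Fin m → ZMod q)]
  congr 1
  ext v
  simp only [Set.mem_ofPred_eq, Set.mem_empty_iff_false, iff_false]
  rintro ⟨h1, -⟩
  have := wtH_le (List.ofFn v)
  simp only [List.length_ofFn] at this
  omega

/-- The number of words of length `m` with exactly `i` long zero runs, as the coefficient of
`Y ^ i` in the generating function, where `Y` marks long runs. Here `p.2` is the total number of
zeros removed on passing to the trunk of length `p.1`. -/
lemma count_longRuns {q ℓ : ℕ} [NeZero q] (hℓ : 1 ≤ ℓ) (m i : ℕ) (hi : 1 ≤ i) :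
    {v : Fin m → ZMod q | longRuns ℓ (List.ofFn v) = i}.ncard =
      ∑ ω ∈ Finset.range (m + 1), ∑ p ∈ Finset.HasAntidiagonal.antidiagonal m,
        Acount q p.1 (ℓ - 1) ω * (Nat.choose (ω + 1) i *
          if ℓ ∣ p.2 ∧ 0 < p.2 then Nat.choose (p.2 / ℓ - 1) (i - 1) else 0) := by
  classical
  let Y : Polynomial ℤ := Polynomial.X
  let f : ℕ → Polynomial ℤ := fun k => if ℓ ≤ k then Y else 1
  have h1 : ∑ v : Fin m → ZMod q, Y ^ longRuns ℓ (List.ofFn v) =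
      ∑ ω ∈ Finset.range (m + 1), ∑ p ∈ Finset.HasAntidiagonal.antidiagonal m,
        (Acount q p.1 (ℓ - 1) ω : Polynomial ℤ) *
          coeff p.2 ((1 + C Y * blockS (Polynomial ℤ) ℓ 0) ^ (ω + 1)) := by
    have e1 : ∀ v : Fin m → ZMod q, Y ^ longRuns ℓ (List.ofFn v) =
        ∑ ω ∈ Finset.range (m + 1),
          if wtH (List.ofFn v) = ω then runW f 0 (List.ofFn v) else 0 := by
      intro v
      have := wtH_le (List.ofFn v)
      simp only [List.length_ofFn] at this
      rw [Finset.sum_ite_eq, if_pos (Finset.mem_range.2 (by omega)), runW_zero, prod_mark]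
      rfl
    rw [Finset.sum_congr rfl (fun v _ => e1 v), Finset.sum_comm]
    apply Finset.sum_congr rfl
    intro ω _
    rw [sum_runW]
    simp only [zero_add]
    rw [show PowerSeries.mk (fun k => f k) = _ from mark_eq hℓ Y]
    have : shortS (Polynomial ℤ) ℓ * (1 + C Y * blockS (Polynomial ℤ) ℓ 0) *
        (C ((q : Polynomial ℤ) - 1) * X *
          (shortS (Polynomial ℤ) ℓ * (1 + C Y * blockS (Polynomial ℤ) ℓ 0))) ^ ω =
        (shortS (Polynomial ℤ) ℓ * (C ((q : Polynomial ℤ) - 1) * X * shortS (Polynomial ℤ) ℓ) ^ ω)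
          * (1 + C Y * blockS (Polynomial ℤ) ℓ 0) ^ (ω + 1) := by
      rw [← mul_assoc _ (shortS _ _), mul_pow]
      ring
    rw [this, coeff_mul]
    apply Finset.sum_congr rfl
    intro p _
    rw [Acount_eq _ hℓ]
  have h2 : ∀ b ω : ℕ, (coeff b ((1 + C Y * blockS (Polynomial ℤ) ℓ 0) ^ (ω + 1))).coeff i =
      ((Nat.choose (ω + 1) i * if ℓ ∣ b ∧ 0 < b then Nat.choose (b / ℓ - 1) (i - 1) else 0 : ℕ)
        : ℤ) := by
    intro b ω
    have e : ∀ j, (coeff b ((C Y * blockS (Polynomial ℤ) ℓ 0) ^ j *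
        ((Nat.choose (ω + 1) j : ℕ) : PowerSeries (Polynomial ℤ)))).coeff i =
        if j = i then ((Nat.choose (ω + 1) i *
          if ℓ ∣ b ∧ 0 < b then Nat.choose (b / ℓ - 1) (i - 1) else 0 : ℕ) : ℤ) else 0 := by
      intro j
      have : (C Y * blockS (Polynomial ℤ) ℓ 0) ^ j *
          ((Nat.choose (ω + 1) j : ℕ) : PowerSeries (Polynomial ℤ)) =
          C (Y ^ j * (Nat.choose (ω + 1) j : Polynomial ℤ)) * blockS (Polynomial ℤ) ℓ 0 ^ j := by
        rw [mul_pow, map_mul, map_pow, map_natCast]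
        ring
      rw [this, coeff_C_mul, mul_assoc, Polynomial.coeff_X_pow_mul']
      cases j with
      | zero =>
        rw [if_neg (c := 0 = i) (by omega), pow_zero, coeff_one]
        split_ifs <;> simp [Polynomial.coeff_one, show i ≠ 0 by omega]
      | succ j =>
        rw [blockS_pow hℓ]
        simp only [blockS, coeff_mk]
        have hc : (((Nat.choose (ω + 1) (j + 1) : ℕ) : Polynomial ℤ) *
            if ℓ ∣ b ∧ 0 < b then ((Nat.choose (b / ℓ - 1) j : ℕ) : Polynomial ℤ) else 0) =
            Polynomial.C ((Nat.choose (ω + 1) (j + 1) *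
              if ℓ ∣ b ∧ 0 < b then Nat.choose (b / ℓ - 1) j else 0 : ℕ) : ℤ) := by
          split_ifs <;> simp
        rw [hc, Polynomial.coeff_C]
        by_cases hji : j + 1 = i
        · subst hji
          simp
        · rw [if_neg hji]
          by_cases hle : j + 1 ≤ i
          · rw [if_pos hle, if_neg (by omega)]
          · rw [if_neg hle]
    rw [add_comm, add_pow, map_sum, Polynomial.finsetSum_coeff]
    simp only [one_pow, mul_one, e]
    rw [Finset.sum_ite_eq']
    by_cases h : i ∈ Finset.range (ω + 1 + 1)
    · rw [if_pos h]
    · rw [if_neg h, Nat.choose_eq_zero_of_lt (by simpa using h)]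
      simp
  have h3 := congrArg (fun P => Polynomial.coeff P i) h1
  simp only [Polynomial.finsetSum_coeff, Polynomial.coeff_natCast_mul, h2] at h3
  have h4 : (({v : Fin m → ZMod q | longRuns ℓ (List.ofFn v) = i}.ncard : ℕ) : ℤ) =
      ∑ v : Fin m → ZMod q, (Y ^ longRuns ℓ (List.ofFn v)).coeff i := by
    rw [Set.ncard_eq_toFinset_card', Set.toFinset_ofPred, Finset.card_filter]
    push_cast
    apply Finset.sum_congr rfl
    intro v _
    rw [Polynomial.coeff_X_pow]
    simp only [eq_comm]
  rw [← h4] at h3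
  exact_mod_cast h3

end Series

/-- The number of words of length `n` over `Z_q` whose single tandem deletion sphere has
size `i + 1`. -/
theorem stmt15 (q ℓ n i : ℕ) (hq : 2 ≤ q) (hℓ : 1 ≤ ℓ) (hn : ℓ ≤ n) (hi : 1 ≤ i) :
    {x : Fin n → ZMod q | (sphere (TDel ℓ) 1 (List.ofFn x)).ncard = i + 1}.ncard =
      ∑ ν ∈ Finset.Icc i (n / ℓ - 1), ∑ ω ∈ Finset.Icc (i - 1) (n - (ν + 1) * ℓ),
        q ^ ℓ * Acount q (n - (ν + 1) * ℓ) (ℓ - 1) ω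
          * Nat.choose (ω + 1) i * Nat.choose (ν - 1) (i - 1) := by
  have : NeZero q := ⟨by omega⟩
  obtain ⟨m, rfl⟩ := Nat.exists_eq_add_of_le hn
  simp only [sphere_ncard hℓ, Nat.add_right_cancel_iff]
  rw [ncard_deriv hq hℓ (fun v => longRuns ℓ v = i), count_longRuns hℓ m i hi, Finset.sum_comm,
    Finset.mul_sum, ← Finset.Nat.sum_antidiagonal_swap,
    Finset.Nat.sum_antidiagonal_eq_sum_range_succ_mk]
  symm
  have hdiv : (ℓ + m) / ℓ - 1 = m / ℓ := by
    rw [Nat.add_div_left _ (by omega)]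
    simp
  rw [hdiv]
  -- The index `ν` stands for `ν * ℓ` deleted zeros.
  apply Finset.sum_of_injOn (fun ν => ν * ℓ)
  · intro a _ b _ h
    exact Nat.eq_of_mul_eq_mul_right (by omega) h
  · intro ν hν
    simp only [Finset.coe_Icc, Set.mem_Icc] at hν
    have := (Nat.le_div_iff_mul_le (by omega)).1 hν.2
    simp only [Finset.coe_range, Set.mem_Iio]
    omega
  · intro b hb hb'
    simp only [Finset.mem_range] at hb
    simp only [Prod.swap_prod_mk]
    rw [Finset.sum_eq_zero, mul_zero]
    intro ω _
    split_ifs with h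
    · obtain ⟨⟨s, rfl⟩, hpos⟩ := h
      have hs : s < i := by
        by_contra hs
        apply hb'
        refine ⟨s, ?_, mul_comm _ _⟩
        simp only [Finset.coe_Icc, Set.mem_Icc]
        refine ⟨by omega, (Nat.le_div_iff_mul_le (by omega)).2 ?_⟩
        rw [mul_comm]
        omega
      have hs0 : s ≠ 0 := by
        rintro rfl
        simp at hpos
      rw [Nat.mul_div_cancel_left _ (by omega),
        Nat.choose_eq_zero_of_lt (show s - 1 < i - 1 by omega)]
      simp
    · simp
  · intro ν hν
    simp only [Finset.mem_Icc] at hν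
    have hle := (Nat.le_div_iff_mul_le (by omega)).1 hν.2
    have hlen : ℓ + m - (ν + 1) * ℓ = m - ν * ℓ := by
      rw [add_mul, one_mul]
      omega
    simp only [Prod.swap_prod_mk]
    have hpos : ℓ ∣ ν * ℓ ∧ 0 < ν * ℓ :=
      ⟨dvd_mul_left _ _, Nat.mul_pos (by omega) (by omega)⟩
    rw [if_pos hpos, Nat.mul_div_cancel _ (by omega), hlen, Finset.mul_sum]
    -- Outside the summation range of the formula one of the two factors vanishes.
    apply Finset.sum_subset_zero_on_sdiff
    · intro ω hω
      simp only [Finset.mem_Icc] at hω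
      simp only [Finset.mem_range]
      omega
    · intro ω hω
      simp only [Finset.mem_sdiff, Finset.mem_range, Finset.mem_Icc, not_and_or, not_le] at hω
      rcases hω.2 with h | h
      · rw [Nat.choose_eq_zero_of_lt (by omega)]
        simp
      · rw [Acount_eq_zero h]
        simp
    · intro ω _
      ring

end DupPaper
end

section
/- Let q ≥ 2, ℓ ≥ 1, x ∈ Z_q^n (indexed x_1, …, x_n), and let i ≥ 0 and 1 ≤ j < ℓ satisfy i + j ≤ n − ℓ. Then π_{i,ℓ}(x) = π_{i+j,ℓ}(x) if and only if all of the following hold: x_{i+ℓ+1+m} = x_{i+ℓ−m} for all m ∈ {0, …, j−1}; x_{i+ℓ+2j−m} = x_{i+ℓ−m} for all m ∈ {j, …, ℓ−1}; and x_{i+ℓ+2j−m} = x_{i+1+m} for all m ∈ {ℓ, …, ℓ+j−1}. -/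
/-!
Write `y = pdupAt i ℓ x` and `y' = pdupAt (i + j) ℓ x`. Both words have length `n + ℓ`, so they
agree iff they agree at each position (`pdupAt_getD` gives the letters, `pdupAt_ext` the
reduction). They agree automatically before position `i + ℓ`, where both still copy `x`, and from
position `i + j + 2 * ℓ` on, where both copy `x` shifted by `ℓ`. At the remaining positions
`i + ℓ + m` with `m < ℓ + j` there are three regimes, which are exactly the three conditions:

* `m < j`: `y` is inside its reversed block, while `y'` still copies `x`;
* `j ≤ m < ℓ`: both are inside their reversed blocks;
* `ℓ ≤ m < ℓ + j`: `y` has returned to copying `x`, while `y'` is inside its reversed block.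
-/

namespace DupPaper

variable {α : Type*}

theorem pdupAt_length (i ℓ : ℕ) (x : List α) (h : i + ℓ ≤ x.length) :
    (pdupAt i ℓ x).length = x.length + ℓ := by
  simp only [pdupAt, List.length_append, List.length_take, List.length_reverse, List.length_drop]
  omega

/-- The letters of a palindromic duplication, with 0-based positions: the prefix `u v` of `x`,
then `v` read backwards, then the rest of `x` shifted by `ℓ`. -/
theorem pdupAt_getD (i ℓ : ℕ) (x : List α) (d : α) (h : i + ℓ ≤ x.length) (p : ℕ) :
    (pdupAt i ℓ x).getD p d =
      if p < i + ℓ then x.getD p d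
      else if p < i + 2 * ℓ then x.getD (2 * i + 2 * ℓ - 1 - p) d
      else x.getD (p - ℓ) d := by
  have htake : (x.take (i + ℓ)).length = i + ℓ := by simp [h]
  have hblock : (((x.drop i).take ℓ).reverse).length = ℓ := by
    simp only [List.length_reverse, List.length_take, List.length_drop]
    omega
  have hblock' : ((x.drop i).take ℓ).length = ℓ := by simpa using hblock
  simp only [List.getD_eq_getElem?_getD, pdupAt]
  split_ifs with h1 h2
  · rw [List.append_assoc, List.getElem?_append_left (by omega), List.getElem?_take_of_lt h1]
  · rw [List.append_assoc, List.getElem?_append_right (by omega),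
      List.getElem?_append_left (by omega), List.getElem?_reverse (by omega),
      List.getElem?_take_of_lt (by omega), List.getElem?_drop]
    congr 2
    omega
  · rw [List.getElem?_append_right (by rw [List.length_append]; omega), List.getElem?_drop]
    congr 2
    rw [List.length_append]
    omega

/-- Two palindromic duplications of the same word agree as soon as all their letters do; the
default value of `getD` is harmless because the lengths coincide. -/
theorem pdupAt_ext (i k ℓ : ℕ) (x : List α) (d : α) (hi : i + ℓ ≤ x.length)
    (hk : k + ℓ ≤ x.length)
    (h : ∀ p, (pdupAt i ℓ x).getD p d = (pdupAt k ℓ x).getD p d) :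
    pdupAt i ℓ x = pdupAt k ℓ x := by
  apply List.ext_getElem
  · rw [pdupAt_length i ℓ x hi, pdupAt_length k ℓ x hk]
  · intro p h1 h2
    have := h p
    rwa [List.getD_eq_getElem _ _ h1, List.getD_eq_getElem _ _ h2] at this

/-- Conditions for two palindromic duplications at positions `i` and `i+j`, `1 ≤ j < ℓ`,
to yield the same word (indices are 1-based: `x_k` is `x.getD (k-1) 0`). -/
theorem stmt17 (q ℓ n : ℕ) (hq : 2 ≤ q) (hℓ : 1 ≤ ℓ) (x : List (ZMod q)) (hx : x.length = n)
    (i j : ℕ) (hj1 : 1 ≤ j) (hjℓ : j < ℓ) (hij : i + j + ℓ ≤ n) :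
    pdupAt i ℓ x = pdupAt (i + j) ℓ x ↔
      ((∀ m < j, x.getD (i + ℓ + m) 0 = x.getD (i + ℓ - m - 1) 0) ∧
       (∀ m, j ≤ m → m < ℓ →
          x.getD (i + ℓ + 2 * j - m - 1) 0 = x.getD (i + ℓ - m - 1) 0) ∧
       (∀ m, ℓ ≤ m → m < ℓ + j →
          x.getD (i + ℓ + 2 * j - m - 1) 0 = x.getD (i + m) 0)) := by
  have hi : i + ℓ ≤ x.length := by omega
  have hk : (i + j) + ℓ ≤ x.length := by omega
  constructor
  · intro h
    -- each condition compares the letters of the two words at position `i + ℓ + m`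
    have key : ∀ m, (pdupAt i ℓ x).getD (i + ℓ + m) 0 =
        (pdupAt (i + j) ℓ x).getD (i + ℓ + m) 0 := fun m => by rw [h]
    refine ⟨fun m hm => ?_, fun m hm hm' => ?_, fun m hm hm' => ?_⟩
    · have := key m
      rw [pdupAt_getD i ℓ x 0 hi, pdupAt_getD (i + j) ℓ x 0 hk, if_neg (by omega),
        if_pos (by omega), if_pos (by omega)] at this
      rw [← this]
      congr 1
      omega
    · have := key m
      rw [pdupAt_getD i ℓ x 0 hi, pdupAt_getD (i + j) ℓ x 0 hk, if_neg (by omega),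
        if_pos (by omega), if_neg (by omega), if_pos (by omega)] at this
      convert this.symm using 2 <;> omega
    · have := key m
      rw [pdupAt_getD i ℓ x 0 hi, pdupAt_getD (i + j) ℓ x 0 hk, if_neg (by omega),
        if_neg (by omega), if_neg (by omega), if_pos (by omega)] at this
      convert this.symm using 2 <;> omega
  · rintro ⟨h1, h2, h3⟩
    refine pdupAt_ext i (i + j) ℓ x 0 hi hk fun p => ?_
    rw [pdupAt_getD i ℓ x 0 hi, pdupAt_getD (i + j) ℓ x 0 hk]
    rcases lt_or_ge p (i + ℓ) with hp | hp
    · rw [if_pos hp, if_pos (by omega)]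
    obtain ⟨m, rfl⟩ := Nat.exists_eq_add_of_le hp
    rw [if_neg (by omega)]
    rcases lt_or_ge m j with hm | hm
    · rw [if_pos (by omega), if_pos (by omega)]
      convert (h1 m hm).symm using 2
      omega
    rcases lt_or_ge m ℓ with hm' | hm'
    · rw [if_pos (by omega), if_neg (by omega), if_pos (by omega)]
      convert (h2 m hm hm').symm using 2 <;> omega
    rw [if_neg (by omega), if_neg (by omega)]
    rcases lt_or_ge m (ℓ + j) with hm'' | hm''
    · rw [if_pos (by omega)]
      convert (h3 m hm' hm'').symm using 2 <;> omega
    · rw [if_neg (by omega)]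
end DupPaper
end
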